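/- Let d ∈ ℕ with d ≥ 4 and let (c_n) be a sequence of real numbers with c_n ≥ (1 + 2^(d+5)/log₂ n)^(1/d) for every n ≥ 2 (and c_1 ≥ 1). Then a random sequence (S_n) in the probability space 𝒢_{(c_n)} almost surely satisfies limsup_{n→∞} F_n(S_n)·(log₂ n)^(−1) < ∞; that is, ℙ[ limsup_{n→∞} F_n(S_n)/(log₂ n) < ∞ ] = 1. -/

import Mathlib

open MeasureTheory

/-- Euclidean distance between two points of the integer lattice `ℤ^d`. -/
noncomputable def zdist {d : ℕ} (x y : Fin d → ℤ) : ℝ :=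
  Real.sqrt (∑ i, ((x i : ℝ) - (y i : ℝ)) ^ 2)

/-- The grid `{1,…,n}^d` as a finset of `ℤ^d`. -/
noncomputable def grid (d n : ℕ) : Finset (Fin d → ℤ) :=
  Fintype.piFinset fun _ => Finset.Icc 1 (n : ℤ)

/-- `F_n(S)`: the least Lipschitz constant (Euclidean metric) of a surjection of `S`
onto the grid `{1,…,n}^d`. -/
noncomputable def Fleast (d n : ℕ) (S : Finset (Fin d → ℤ)) : ℝ :=
  sInf {L : ℝ | ∃ f : (Fin d → ℤ) → (Fin d → ℤ),
    (∀ x ∈ S, f x ∈ grid d n) ∧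
    (∀ y ∈ grid d n, ∃ x ∈ S, f x = y) ∧
    (∀ x ∈ S, ∀ y ∈ S, zdist (f x) (f y) ≤ L * zdist x y)}

/-- The grid `{1,…,m}^d` (with `m : ℤ`), as a finite type. -/
abbrev gridPt (d : ℕ) (m : ℤ) : Type := Fin d → (Finset.Icc (1 : ℤ) m : Finset ℤ)

/-- The space of configurations of `N` points inside the grid `{1,…,m}^d`. -/
abbrev Config (d : ℕ) (m : ℤ) (N : ℕ) : Type := {S : Finset (gridPt d m) // S.card = N}

/-- A configuration in `gridPt d m`, regarded as a finset of the integer lattice. -/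
def toLattice {d : ℕ} {m : ℤ} (S : Finset (gridPt d m)) : Finset (Fin d → ℤ) :=
  S.image fun x i => (x i : ℤ)

instance (d : ℕ) (m : ℤ) (N : ℕ) : MeasurableSpace (Config d m N) := ⊤

/-!
Subdivide both `{1, …, M}^d` and `{1, …, n}^d` into `2^κ` slabs in each direction, for every `κ ≤ k`
with `k` chosen so that the finest cells of `{1, …, n}^d` have side `l = n / 2^k ≍ log n`.

A Chernoff bound for uniformly random `n^d`-element sets and a union bound over all cells show
that, outside an event of probability `2 / n^2`, every cell of scale `κ` holds as many points of
`S` as the corresponding cell of `{1, …, n}^d` up to the order of its surface area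
`(n / 2^κ)^(d - 1)`. For a union `Q` of finest cells, telescoping the indicator of `Q` through its
averages over coarser cells bounds the discrepancy by a constant times `k * l^(d - 1) * |∂Q|`:
every scale contributes one boundary term, because averaging over the children contracts the total
variation by at least the factor by which the error per cell grows. Since `k ≤ log₂ n` and `l` is a
large multiple of `log₂ n`, this is at most the number of grid points in the cells of `∂Q`, which is
Hall's condition for a bijection from `S` onto `{1, …, n}^d` that moves every point to a cell
touching its own. Such a bijection is `O(l)`-Lipschitz, and the Borel–Cantelli lemma concludes.
-/

section Chernoff

open Finset

lemma choose_sub_sub_le {M N j : ℕ} (hNM : N ≤ M) (hjN : j ≤ N) :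
    ((M - j).choose (N - j) : ℝ) ≤ M.choose N * ((N : ℝ) / M) ^ j := by
  induction j with
  | zero => simp
  | succ j ih =>
    obtain ⟨m, rfl⟩ : ∃ m, M = m + 1 + j := ⟨M - 1 - j, by omega⟩
    obtain ⟨k, rfl⟩ : ∃ k, N = k + 1 + j := ⟨N - 1 - j, by omega⟩
    have ih := ih (by omega)
    rw [Nat.add_sub_cancel, Nat.add_sub_cancel] at ih
    rw [show m + 1 + j - (j + 1) = m by omega, show k + 1 + j - (j + 1) = k by omega]
    have pascal : (m.choose k : ℝ) = (m + 1).choose (k + 1) * ((k + 1) / (m + 1)) := by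
      have := Nat.add_one_mul_choose_eq m k
      field_simp
      exact_mod_cast (mul_comm _ _).trans this
    have ratio_mono : ((k : ℝ) + 1) / (m + 1) ≤ ((k + 1 + j : ℕ) : ℝ) / (m + 1 + j : ℕ) := by
      have : (k : ℝ) ≤ m := by exact_mod_cast (by omega : k ≤ m)
      push_cast
      rw [div_le_div_iff₀ (by positivity) (by positivity)]
      nlinarith [Nat.cast_nonneg (α := ℝ) j]
    rw [pascal, pow_succ, ← mul_assoc]
    gcongr

lemma one_add_pow_card_inter {Ω : Type*} [DecidableEq Ω] (S B : Finset Ω) (u : ℝ) :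
    (1 + u) ^ #(S ∩ B) = ∑ U ∈ B.powerset, if U ⊆ S then u ^ #U else 0 := by
  rw [← sum_filter, add_comm, ← sum_pow_mul_eq_add_pow]
  refine sum_congr ?_ fun _ _ => by rw [one_pow, mul_one]
  ext U
  rw [mem_filter, mem_powerset, mem_powerset, subset_inter_iff, and_comm]

variable {Ω : Type*} [Fintype Ω] [DecidableEq Ω] {N : ℕ}

lemma card_powersetCard_superset_le (U : Finset Ω) (hN : N ≤ Fintype.card Ω) :
    (#{S ∈ powersetCard N (univ : Finset Ω) | U ⊆ S} : ℝ) ≤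
      (Fintype.card Ω).choose N * ((N : ℝ) / Fintype.card Ω) ^ #U := by
  by_cases hU : #U ≤ N
  · rw [card_filter_powersetCard_subset U univ N (subset_univ U) hU, card_univ]
    exact choose_sub_sub_le hN hU
  · have no_superset : {S ∈ powersetCard N (univ : Finset Ω) | U ⊆ S} = ∅ :=
      filter_eq_empty_iff.2 fun S hS hUS =>
        hU ((card_le_card hUS).trans (mem_powersetCard_univ.1 hS).le)
    rw [no_superset, card_empty, Nat.cast_zero]
    positivity

lemma sum_one_add_pow_card_inter_le_of_nonneg (B : Finset Ω) (hN : N ≤ Fintype.card Ω)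
    {u : ℝ} (hu : 0 ≤ u) :
    ∑ S ∈ powersetCard N (univ : Finset Ω), (1 + u) ^ #(S ∩ B) ≤
      (Fintype.card Ω).choose N * (1 + u * ((N : ℝ) / Fintype.card Ω)) ^ #B := by
  set p : ℝ := (N : ℝ) / Fintype.card Ω
  calc ∑ S ∈ powersetCard N (univ : Finset Ω), (1 + u) ^ #(S ∩ B)
      = ∑ U ∈ B.powerset, #{S ∈ powersetCard N (univ : Finset Ω) | U ⊆ S} * u ^ #U := by
        simp_rw [one_add_pow_card_inter]
        rw [sum_comm]
        simp_rw [← sum_filter, sum_const, nsmul_eq_mul]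
    _ ≤ ∑ U ∈ B.powerset, (Fintype.card Ω).choose N * p ^ #U * u ^ #U := by
        gcongr with U
        exact card_powersetCard_superset_le U hN
    _ = (Fintype.card Ω).choose N * (1 + u * p) ^ #B := by
        rw [add_comm (1 : ℝ), ← sum_pow_mul_eq_add_pow, mul_sum]
        refine sum_congr rfl fun U _ => ?_
        rw [one_pow, mul_pow]
        ring

lemma one_add_pow_card_compl_inter (T B : Finset Ω) {u : ℝ} (hu : -1 < u) :
    (1 + u) ^ #(Tᶜ ∩ B) = (1 + u) ^ #B * (1 + -u / (1 + u)) ^ #(T ∩ B) := by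
  have hu' : 1 + u ≠ 0 := by linarith
  have inv_eq : 1 + -u / (1 + u) = (1 + u)⁻¹ := by field_simp; ring
  have card_split : #B = #(Tᶜ ∩ B) + #(T ∩ B) := by
    rw [inter_comm, inter_comm T, ← sdiff_eq_inter_compl, card_sdiff_add_card_inter]
  rw [inv_eq, card_split, pow_add, mul_assoc, ← mul_pow, mul_inv_cancel₀ hu', one_pow, mul_one]

/- For `u < 0` the estimate is the case `u ≥ 0` applied to the complements of the sets `S`. -/
lemma sum_one_add_pow_card_inter_le (B : Finset Ω) (hN : N ≤ Fintype.card Ω)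
    {u : ℝ} (hu : -1 < u) :
    ∑ S ∈ powersetCard N (univ : Finset Ω), (1 + u) ^ #(S ∩ B) ≤
      (Fintype.card Ω).choose N * (1 + u * ((N : ℝ) / Fintype.card Ω)) ^ #B := by
  rcases le_or_gt 0 u with hu0 | hu0
  · exact sum_one_add_pow_card_inter_le_of_nonneg B hN hu0
  obtain rfl | ⟨b, -⟩ := B.eq_empty_or_nonempty
  · simp
  have card_pos : (0 : ℝ) < Fintype.card Ω := by
    exact_mod_cast Fintype.card_pos_iff.2 ⟨b⟩
  have hu1 : 0 < 1 + u := by linarith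
  have sum_compl : ∑ S ∈ powersetCard N (univ : Finset Ω), (1 + u) ^ #(S ∩ B) =
      ∑ T ∈ powersetCard (Fintype.card Ω - N) (univ : Finset Ω), (1 + u) ^ #(Tᶜ ∩ B) := by
    refine sum_nbij' compl compl ?_ ?_ ?_ ?_ ?_ <;> intro S hS <;>
      simp only [mem_powersetCard_univ, card_compl, compl_compl] at hS ⊢ <;> omega
  have dual := sum_one_add_pow_card_inter_le_of_nonneg B (Nat.sub_le (Fintype.card Ω) N)
    (u := -u / (1 + u)) (div_nonneg (by linarith) hu1.le)
  rw [Nat.choose_symm hN, Nat.cast_sub hN] at dual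
  simp_rw [sum_compl, one_add_pow_card_compl_inter _ B hu, ← mul_sum]
  refine (mul_le_mul_of_nonneg_left dual (by positivity)).trans_eq ?_
  rw [mul_left_comm, ← mul_pow]
  congr 2
  field_simp
  ring

/-- The mean of `#(S ∩ B)` for a uniformly random `N`-element subset `S` of `Ω`. -/
noncomputable def expectedCard (B : Finset Ω) (N : ℕ) : ℝ :=
  #B * ((N : ℝ) / Fintype.card Ω)

lemma exp_sub_two_mul_sq_le {u : ℝ} (hu : -1 / 2 ≤ u) : Real.exp (u - 2 * u ^ 2) ≤ 1 + u := by
  have hu1 : 0 < 1 + u := by linarith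
  rw [← Real.le_log_iff_exp_le hu1]
  refine le_trans ?_ (Real.one_sub_inv_le_log_of_pos hu1)
  rw [show 1 - (1 + u)⁻¹ = u / (1 + u) by field_simp; ring, le_div_iff₀ hu1]
  nlinarith [mul_nonneg (sq_nonneg u) (by linarith : 0 ≤ 1 + 2 * u)]

lemma sum_exp_mul_card_inter_le (B : Finset Ω) (hN : N ≤ Fintype.card Ω)
    {u : ℝ} (hu : -1 / 2 ≤ u) :
    ∑ S ∈ powersetCard N (univ : Finset Ω), Real.exp ((u - 2 * u ^ 2) * #(S ∩ B)) ≤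
      (Fintype.card Ω).choose N * Real.exp (u * expectedCard B N) := by
  set p : ℝ := (N : ℝ) / Fintype.card Ω
  have hp0 : 0 ≤ p := by positivity
  have hp1 : p ≤ 1 := div_le_one_of_le₀ (by exact_mod_cast hN) (by positivity)
  calc ∑ S ∈ powersetCard N (univ : Finset Ω), Real.exp ((u - 2 * u ^ 2) * #(S ∩ B))
      ≤ ∑ S ∈ powersetCard N (univ : Finset Ω), (1 + u) ^ #(S ∩ B) := by
        gcongr with S
        rw [mul_comm, Real.exp_nat_mul]
        exact pow_le_pow_left₀ (Real.exp_pos _).le (exp_sub_two_mul_sq_le hu) _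
    _ ≤ (Fintype.card Ω).choose N * (1 + u * p) ^ #B :=
        sum_one_add_pow_card_inter_le B hN (by linarith)
    _ ≤ (Fintype.card Ω).choose N * Real.exp (u * p) ^ #B := by
        have : 0 ≤ 1 + u * p := by nlinarith
        gcongr
        linarith [Real.add_one_le_exp (u * p)]
    _ = (Fintype.card Ω).choose N * Real.exp (u * expectedCard B N) := by
        rw [← Real.exp_nat_mul, expectedCard, mul_left_comm]

/- The sign of `δ` selects the tail: upper for `δ > 0`, lower for `δ < 0`. -/
lemma card_one_sided_deviation_le (B : Finset Ω) (hN : N ≤ Fintype.card Ω)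
    {δ : ℝ} (hδ : |δ| ≤ 1) :
    (#{S ∈ powersetCard N (univ : Finset Ω) |
        0 ≤ δ * (#(S ∩ B) - (1 + δ) * expectedCard B N)} : ℝ) ≤
      (Fintype.card Ω).choose N * Real.exp (-(δ ^ 2 * expectedCard B N / 16)) := by
  obtain ⟨hδ_lower, hδ_upper⟩ := abs_le.1 hδ
  have mgf := sum_exp_mul_card_inter_le B hN (u := δ / 8) (by linarith)
  set m : ℝ := expectedCard B N with hm
  have hm0 : 0 ≤ m := by rw [hm, expectedCard]; positivity
  set s : ℝ := δ / 8 - 2 * (δ / 8) ^ 2 with hs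
  have hs' : s = (4 - δ) / 32 * δ := by rw [hs]; ring
  have markov : (#{S ∈ powersetCard N (univ : Finset Ω) |
        0 ≤ δ * (#(S ∩ B) - (1 + δ) * m)} : ℝ) * Real.exp (s * ((1 + δ) * m)) ≤
      ∑ S ∈ powersetCard N (univ : Finset Ω), Real.exp (s * #(S ∩ B)) := by
    rw [← nsmul_eq_mul, ← sum_const]
    refine (sum_le_sum fun S hS => ?_).trans
      (sum_le_sum_of_subset_of_nonneg (filter_subset _ _) fun _ _ _ => (Real.exp_pos _).le)
    have := mul_nonneg (by linarith : 0 ≤ (4 - δ) / 32) (mem_filter.1 hS).2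
    rw [Real.exp_le_exp, hs']
    linarith
  have exponent_le : δ / 8 * m ≤ -(δ ^ 2 * m / 16) + s * ((1 + δ) * m) := by
    have := mul_nonneg (mul_nonneg hm0 (sq_nonneg δ)) (by linarith : 0 ≤ (1 - δ) / 32)
    rw [hs']
    linarith
  refine le_of_mul_le_mul_right (markov.trans (mgf.trans ?_)) (Real.exp_pos (s * ((1 + δ) * m)))
  rw [mul_assoc, ← Real.exp_add]
  gcongr

lemma card_deviation_le (B : Finset Ω) (hN : N ≤ Fintype.card Ω)
    {δ : ℝ} (hδ0 : 0 ≤ δ) (hδ1 : δ ≤ 1) :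
    (#{S ∈ powersetCard N (univ : Finset Ω) |
        δ * expectedCard B N < |(#(S ∩ B) : ℝ) - expectedCard B N|} : ℝ) ≤
      (Fintype.card Ω).choose N * (2 * Real.exp (-(δ ^ 2 * expectedCard B N / 16))) := by
  have upper := card_one_sided_deviation_le B hN (abs_le.2 ⟨by linarith, hδ1⟩)
  have lower := card_one_sided_deviation_le B hN (δ := -δ) (abs_le.2 ⟨by linarith, by linarith⟩)
  rw [neg_sq] at lower
  set m : ℝ := expectedCard B N
  have union_bound : #{S ∈ powersetCard N (univ : Finset Ω) | δ * m < |(#(S ∩ B) : ℝ) - m|} ≤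
      #{S ∈ powersetCard N (univ : Finset Ω) | 0 ≤ δ * (#(S ∩ B) - (1 + δ) * m)} +
      #{S ∈ powersetCard N (univ : Finset Ω) | 0 ≤ -δ * (#(S ∩ B) - (1 + -δ) * m)} := by
    refine le_trans (card_le_card fun S hS => ?_) (card_union_le _ _)
    simp only [mem_filter, mem_union] at hS ⊢
    rcases lt_abs.1 hS.2 with h | h
    · exact .inl ⟨hS.1, mul_nonneg hδ0 (by linarith)⟩
    · exact .inr ⟨hS.1, mul_nonneg_of_nonpos_of_nonpos (by linarith) (by linarith)⟩
  have union_bound' := (Nat.cast_le (α := ℝ)).2 union_bound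
  push_cast at union_bound'
  linarith

end Chernoff

section DiscreteVariation

open Finset

variable {d K : ℕ}

/-- The lattice cube `{0, …, K - 1}^d`; it indexes the cells of a subdivision into `K^d` boxes. -/
def latticeBox (d K : ℕ) : Finset (Fin d → ℕ) := Fintype.piFinset fun _ => range K

lemma mem_latticeBox {x : Fin d → ℕ} : x ∈ latticeBox d K ↔ ∀ i, x i < K := by
  simp [latticeBox]

lemma add_single_mem_latticeBox {x : Fin d → ℕ} {i : Fin d} (hx : x ∈ latticeBox d K)
    (hi : x i + 1 < K) : x + Pi.single i 1 ∈ latticeBox d K := by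
  refine mem_latticeBox.2 fun j => ?_
  rcases eq_or_ne j i with rfl | hj
  · simpa using hi
  · simpa [hj] using mem_latticeBox.1 hx j

/-- The total variation of `u` along the edges of the grid graph on `latticeBox d K`. -/
noncomputable def gridVariation (d K : ℕ) (u : (Fin d → ℕ) → ℝ) : ℝ :=
  ∑ i, ∑ x ∈ latticeBox d K with x i + 1 < K, |u (x + Pi.single i 1) - u x|

/-- The dyadic child of the cell `q` in position `e`: halving every cell of a subdivision, the
cell `q` splits into the `2^d` cells `child q e`. -/
def child (q : Fin d → ℕ) (e : Fin d → Fin 2) : Fin d → ℕ := fun i => 2 * q i + e i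

lemma eq_child_iff {p q : Fin d → ℕ} {e : Fin d → Fin 2} :
    p = child q e ↔ (fun i => p i / 2) = q ∧ (fun i => Fin.ofNat 2 (p i)) = e := by
  simp only [funext_iff, ← forall_and, child, Fin.ext_iff, Fin.val_ofNat]
  refine forall_congr' fun i => ?_
  omega

lemma child_mem_latticeBox {q : Fin d → ℕ} (hq : q ∈ latticeBox d K) (e : Fin d → Fin 2) :
    child q e ∈ latticeBox d (2 * K) := by
  refine mem_latticeBox.2 fun i => ?_
  have := mem_latticeBox.1 hq i
  simp only [child]
  omega

lemma child_add_single (q : Fin d → ℕ) (e : Fin d → Fin 2) (i : Fin d) :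
    child (q + Pi.single i 1) e = child q e + Pi.single i 1 + Pi.single i 1 := by
  funext j
  rcases eq_or_ne j i with rfl | hj
  · simp only [child, Pi.add_apply, Pi.single_eq_same]
    ring
  · simp [child, hj]

lemma sum_latticeBox_two_mul (g : (Fin d → ℕ) → ℝ) :
    ∑ x ∈ latticeBox d (2 * K), g x =
      ∑ q ∈ latticeBox d K, ∑ e : Fin d → Fin 2, g (child q e) := by
  rw [← sum_product']
  refine (sum_nbij' (fun p => child p.1 p.2)
    (fun x => (fun i => x i / 2, fun i => Fin.ofNat 2 (x i))) ?_ ?_ ?_ ?_ fun _ _ => rfl).symm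
  · exact fun p hp => child_mem_latticeBox (mem_product.1 hp).1 _
  · intro x hx
    refine mem_product.2 ⟨mem_latticeBox.2 fun i => ?_, mem_univ _⟩
    have := mem_latticeBox.1 hx i
    simp only
    omega
  · intro p _
    have := eq_child_iff.1 (rfl : child p.1 p.2 = child p.1 p.2)
    exact Prod.ext this.1 this.2
  · exact fun x _ => (eq_child_iff.2 ⟨rfl, rfl⟩).symm

/-- The part of the total variation of `v` carried by the edges in direction `i` between two
children of the cell `q`. -/
noncomputable def childVariation (v : (Fin d → ℕ) → ℝ) (q : Fin d → ℕ) (i : Fin d) : ℝ :=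
  ∑ e : Fin d → Fin 2 with e i = 0, |v (child q e + Pi.single i 1) - v (child q e)|

lemma childVariation_nonneg (v : (Fin d → ℕ) → ℝ) (q : Fin d → ℕ) (i : Fin d) :
    0 ≤ childVariation v q i :=
  sum_nonneg fun _ _ => abs_nonneg _

lemma abs_child_update_sub_le (v : (Fin d → ℕ) → ℝ) (q : Fin d → ℕ) {e : Fin d → Fin 2}
    {i : Fin d} (he : e i = 0) (b : Fin 2) :
    |v (child q (Function.update e i b)) - v (child q e)| ≤ childVariation v q i := by
  obtain rfl | rfl : b = 0 ∨ b = 1 := by omega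
  · rw [Function.update_eq_self_iff.2 he.symm, sub_self, abs_zero]
    exact childVariation_nonneg v q i
  · have shift : child q (Function.update e i 1) = child q e + Pi.single i 1 := by
      funext j
      rcases eq_or_ne j i with rfl | hj
      · simp [child, he]
      · simp [child, hj]
    rw [shift, childVariation]
    have he' : e ∈ ({e | e i = 0} : Finset (Fin d → Fin 2)) := mem_filter.2 ⟨mem_univ e, he⟩
    exact single_le_sum (f := fun e => |v (child q e + Pi.single i 1) - v (child q e)|)
      (fun _ _ => abs_nonneg _) he'

/- Walk from the corner `child q 0` to `child q e` by switching on one coordinate at a time. -/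
lemma abs_child_sub_child_zero_le (v : (Fin d → ℕ) → ℝ) (q : Fin d → ℕ) (e : Fin d → Fin 2) :
    |v (child q e) - v (child q 0)| ≤ ∑ i, childVariation v q i := by
  suffices partial_walk : ∀ s : Finset (Fin d),
      |v (child q (s.piecewise e 0)) - v (child q 0)| ≤ ∑ i ∈ s, childVariation v q i by
    simpa using partial_walk univ
  intro s
  induction s using Finset.induction_on with
  | empty => simp
  | insert i s hi ih =>
    rw [sum_insert hi, piecewise_insert]
    exact (abs_sub_le _ _ _).trans
      (add_le_add (abs_child_update_sub_le v q (by simp [hi]) (e i)) ih)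

lemma sum_childVariation_le_gridVariation (v : (Fin d → ℕ) → ℝ) :
    ∑ q ∈ latticeBox d K, ∑ i, childVariation v q i ≤ gridVariation d (2 * K) v := by
  rw [sum_comm, gridVariation]
  refine sum_le_sum fun i _ => ?_
  rw [sum_filter, sum_latticeBox_two_mul]
  refine sum_le_sum fun q hq => ?_
  rw [childVariation, sum_filter]
  refine sum_le_sum fun e _ => ?_
  split_ifs with he h
  · exact le_rfl
  · have := mem_latticeBox.1 hq i
    simp only [child, he] at h
    omega
  · positivity
  · exact le_rfl

/-- The average of `u` over the `2^d` children of the cell `q`. -/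
noncomputable def childAverage (u : (Fin d → ℕ) → ℝ) (q : Fin d → ℕ) : ℝ :=
  (∑ e : Fin d → Fin 2, u (child q e)) / 2 ^ d

lemma two_pow_mul_childAverage (u : (Fin d → ℕ) → ℝ) (q : Fin d → ℕ) :
    2 ^ d * childAverage u q = ∑ e : Fin d → Fin 2, u (child q e) :=
  mul_div_cancel₀ _ (by positivity)

lemma abs_child_sub_childAverage_le (u : (Fin d → ℕ) → ℝ) (q : Fin d → ℕ) (e : Fin d → Fin 2) :
    |u (child q e) - childAverage u q| ≤ 2 * ∑ i, childVariation u q i := by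
  set W := ∑ i, childVariation u q i
  have scaled : 2 ^ d * |u (child q e) - childAverage u q| ≤ 2 ^ d * (2 * W) := by
    calc 2 ^ d * |u (child q e) - childAverage u q|
        = |∑ e' : Fin d → Fin 2, (u (child q e) - u (child q e'))| := by
          rw [sum_sub_distrib, ← two_pow_mul_childAverage, sum_const, card_univ,
            Fintype.card_pi_const, Fintype.card_fin, nsmul_eq_mul, Nat.cast_pow, Nat.cast_ofNat,
            ← mul_sub, abs_mul, abs_of_pos (by positivity : (0 : ℝ) < 2 ^ d)]
      _ ≤ ∑ _e' : Fin d → Fin 2, 2 * W := by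
          refine (abs_sum_le_sum_abs _ _).trans (sum_le_sum fun e' _ => ?_)
          have to_corner := abs_child_sub_child_zero_le u q e
          have from_corner := abs_child_sub_child_zero_le u q e'
          rw [abs_sub_comm] at from_corner
          linarith [abs_sub_le (u (child q e)) (u (child q 0)) (u (child q e'))]
      _ = 2 ^ d * (2 * W) := by simp
  exact le_of_mul_le_mul_left scaled (by positivity)

lemma two_pow_mul_abs_childAverage_sub_le (u : (Fin d → ℕ) → ℝ) (q : Fin d → ℕ) (i : Fin d) :
    2 ^ d * |childAverage u (q + Pi.single i 1) - childAverage u q| ≤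
      ∑ e : Fin d → Fin 2, (|u (child q e + Pi.single i 1 + Pi.single i 1)
        - u (child q e + Pi.single i 1)| + |u (child q e + Pi.single i 1) - u (child q e)|) := by
  calc 2 ^ d * |childAverage u (q + Pi.single i 1) - childAverage u q|
      = |∑ e : Fin d → Fin 2, (u (child (q + Pi.single i 1) e) - u (child q e))| := by
        rw [sum_sub_distrib, ← two_pow_mul_childAverage, ← two_pow_mul_childAverage, ← mul_sub,
          abs_mul, abs_of_pos (by positivity : (0 : ℝ) < 2 ^ d)]
    _ ≤ _ := by
        refine (abs_sum_le_sum_abs _ _).trans (sum_le_sum fun e _ => ?_)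
        rw [child_add_single]
        exact abs_sub_le _ _ _

lemma sum_latticeBox_shift_le {w : (Fin d → ℕ) → ℝ} (hw : ∀ x, 0 ≤ w x) (i : Fin d) :
    ∑ x ∈ latticeBox d K with x i + 2 < K, w (x + Pi.single i 1) ≤
      ∑ x ∈ latticeBox d K with x i + 1 < K, w x := by
  rw [← sum_image (f := w) (add_left_injective (Pi.single i 1)).injOn]
  refine sum_le_sum_of_subset_of_nonneg (image_subset_iff.2 fun x hx => ?_) fun x _ _ => hw x
  obtain ⟨hx, hxi⟩ := mem_filter.1 hx
  refine mem_filter.2 ⟨add_single_mem_latticeBox hx (by omega), ?_⟩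
  simpa using hxi

lemma two_pow_mul_gridVariation_childAverage_le (u : (Fin d → ℕ) → ℝ) :
    2 ^ d * gridVariation d K (childAverage u) ≤ 2 * gridVariation d (2 * K) u := by
  rw [gridVariation, gridVariation, mul_sum, mul_sum]
  refine sum_le_sum fun i _ => ?_
  rw [mul_sum]
  set w : (Fin d → ℕ) → ℝ := fun x => |u (x + Pi.single i 1) - u x|
  have hw : ∀ x, 0 ≤ w x := fun x => abs_nonneg _
  calc ∑ q ∈ latticeBox d K with q i + 1 < K,
        2 ^ d * |childAverage u (q + Pi.single i 1) - childAverage u q|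
      ≤ ∑ x ∈ latticeBox d (2 * K) with x i + 2 < 2 * K, (w (x + Pi.single i 1) + w x) := by
        rw [sum_filter, sum_filter, sum_latticeBox_two_mul]
        refine sum_le_sum fun q _ => ?_
        split_ifs with hq
        · refine (two_pow_mul_abs_childAverage_sub_le u q i).trans_eq (sum_congr rfl fun e _ => ?_)
          rw [if_pos (by simp only [child]; omega)]
        · refine sum_nonneg fun e _ => ?_
          split_ifs
          exacts [add_nonneg (hw _) (hw _), le_rfl]
    _ ≤ 2 * ∑ x ∈ latticeBox d (2 * K) with x i + 1 < 2 * K, w x := by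
        rw [sum_add_distrib, two_mul (∑ x ∈ _ with _, w x)]
        refine add_le_add (sum_latticeBox_shift_le hw i)
          (sum_le_sum_of_subset_of_nonneg (fun x hx => ?_) fun x _ _ => hw x)
        obtain ⟨hx, hxi⟩ := mem_filter.1 hx
        exact mem_filter.2 ⟨hx, by omega⟩

lemma abs_sum_mul_le_childAverage {F : (Fin d → ℕ) → ℝ} {b : ℝ} (hb : 0 ≤ b)
    (hF : ∀ x ∈ latticeBox d (2 * K), |F x| ≤ b) (u : (Fin d → ℕ) → ℝ) :
    |∑ x ∈ latticeBox d (2 * K), u x * F x| ≤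
      2 ^ (d + 1) * b * gridVariation d (2 * K) u +
        |∑ q ∈ latticeBox d K, childAverage u q * ∑ e : Fin d → Fin 2, F (child q e)| := by
  have split_average : ∑ x ∈ latticeBox d (2 * K), u x * F x =
      ∑ q ∈ latticeBox d K, ∑ e : Fin d → Fin 2,
        (u (child q e) - childAverage u q) * F (child q e) +
      ∑ q ∈ latticeBox d K, childAverage u q * ∑ e : Fin d → Fin 2, F (child q e) := by
    rw [sum_latticeBox_two_mul]
    simp only [sub_mul, sum_sub_distrib, mul_sum, sub_add_cancel]
  have oscillation_le : |∑ q ∈ latticeBox d K, ∑ e : Fin d → Fin 2,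
        (u (child q e) - childAverage u q) * F (child q e)| ≤
      2 ^ (d + 1) * b * gridVariation d (2 * K) u := by
    calc _ ≤ ∑ q ∈ latticeBox d K, ∑ _e : Fin d → Fin 2, 2 * (∑ i, childVariation u q i) * b := by
          refine (abs_sum_le_sum_abs _ _).trans (sum_le_sum fun q hq =>
            (abs_sum_le_sum_abs _ _).trans (sum_le_sum fun e _ => ?_))
          rw [abs_mul]
          have := abs_child_sub_childAverage_le u q e
          exact mul_le_mul this (hF _ (child_mem_latticeBox hq e)) (abs_nonneg _)
            ((abs_nonneg _).trans this)
      _ = 2 ^ (d + 1) * b * ∑ q ∈ latticeBox d K, ∑ i, childVariation u q i := by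
          simp only [sum_const, card_univ, Fintype.card_pi_const, Fintype.card_fin, nsmul_eq_mul]
          rw [mul_sum]
          refine sum_congr rfl fun q _ => ?_
          push_cast
          ring
      _ ≤ _ := by
          gcongr
          exact sum_childVariation_le_gridVariation u
  rw [split_average]
  exact (abs_add_le _ _).trans (by gcongr)

/- Summation over scales: each halving costs one boundary term, and passing to averages multiplies
the variation by at most `2 / 2^d`, which is what the growth `(2^(d-1))^(k-κ)` compensates. -/
lemma abs_sum_mul_le_gridVariation {F : ℕ → (Fin d → ℕ) → ℝ} {k : ℕ} {β : ℝ} (hd : 1 ≤ d)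
    (hF_root : F 0 0 = 0)
    (hF_child : ∀ κ < k, ∀ q ∈ latticeBox d (2 ^ κ),
      F κ q = ∑ e : Fin d → Fin 2, F (κ + 1) (child q e))
    (hF_le : ∀ κ ≤ k, ∀ q ∈ latticeBox d (2 ^ κ), |F κ q| ≤ β * (2 ^ (d - 1)) ^ (k - κ))
    {κ : ℕ} (hκ : κ ≤ k) (u : (Fin d → ℕ) → ℝ) :
    |∑ x ∈ latticeBox d (2 ^ κ), u x * F κ x| ≤
      κ * 2 ^ (d + 1) * (β * (2 ^ (d - 1)) ^ (k - κ)) * gridVariation d (2 ^ κ) u := by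
  have hβ : 0 ≤ β := by
    simpa using (abs_nonneg _).trans (hF_le k le_rfl 0 (mem_latticeBox.2 fun _ => by simp))
  induction κ generalizing u with
  | zero =>
    have root_only : latticeBox d (2 ^ 0) = {0} := by
      ext x
      simp [mem_latticeBox, funext_iff]
    rw [root_only, sum_singleton, hF_root, mul_zero, abs_zero, Nat.cast_zero, zero_mul, zero_mul,
      zero_mul]
  | succ κ ih =>
    set b : ℝ := β * (2 ^ (d - 1)) ^ (k - (κ + 1))
    have hb : 0 ≤ b := by positivity
    have coarse_bound : β * (2 ^ (d - 1)) ^ (k - κ) = b * 2 ^ (d - 1) := by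
      rw [show k - κ = k - (κ + 1) + 1 by omega, pow_succ, mul_assoc]
    have average_le := two_pow_mul_gridVariation_childAverage_le (K := 2 ^ κ) u
    obtain ⟨d, rfl⟩ : ∃ d', d = d' + 1 := ⟨d - 1, by omega⟩
    rw [Nat.add_sub_cancel] at coarse_bound
    have coarse := ih (by omega) (childAverage u)
    rw [Nat.add_sub_cancel, coarse_bound] at coarse
    have halve := abs_sum_mul_le_childAverage (K := 2 ^ κ) hb
      (fun x hx => hF_le (κ + 1) hκ x (by rwa [pow_succ'])) u
    have parents : ∑ q ∈ latticeBox (d + 1) (2 ^ κ), childAverage u q * F κ q =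
        ∑ q ∈ latticeBox (d + 1) (2 ^ κ),
          childAverage u q * ∑ e : Fin (d + 1) → Fin 2, F (κ + 1) (child q e) :=
      sum_congr rfl fun q hq => by rw [hF_child κ hκ q hq]
    rw [← parents] at halve
    have fine_le : κ * 2 ^ (d + 1 + 1) * (b * 2 ^ d) * gridVariation (d + 1) (2 ^ κ)
        (childAverage u) ≤ κ * 2 ^ (d + 1 + 1) * b * gridVariation (d + 1) (2 * 2 ^ κ) u := by
      rw [← mul_assoc _ b, mul_assoc _ (2 ^ d)]
      gcongr
      rw [pow_succ] at average_le
      linarith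
    rw [pow_succ']
    push_cast
    linarith

/-- Two cells are near if they agree or touch, i.e. lie at `ℓ^∞`-distance at most `1`. -/
def Near (x y : Fin d → ℕ) : Prop := ∀ i, x i ≤ y i + 1 ∧ y i ≤ x i + 1

instance (x y : Fin d → ℕ) : Decidable (Near x y) :=
  inferInstanceAs (Decidable (∀ i, x i ≤ y i + 1 ∧ y i ≤ x i + 1))

lemma Near.symm {x y : Fin d → ℕ} (h : Near x y) : Near y x := fun i => (h i).symm

lemma near_add_single (x : Fin d → ℕ) (i : Fin d) : Near x (x + Pi.single i 1) := by
  intro j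
  rcases eq_or_ne j i with rfl | hj
  · simp only [Pi.add_apply, Pi.single_eq_same]
    omega
  · simp [hj]

/-- The cells of `latticeBox d K` outside `Q` that are near some cell of `Q`. -/
def outerBoundary (d K : ℕ) (Q : Finset (Fin d → ℕ)) : Finset (Fin d → ℕ) :=
  {x ∈ latticeBox d K | x ∉ Q ∧ ∃ y ∈ Q, Near x y}

lemma abs_indicator_sub_le {Q : Finset (Fin d → ℕ)} {x y : Fin d → ℕ} (hx : x ∈ latticeBox d K)
    (hy : y ∈ latticeBox d K) (hxy : Near x y) :
    |(if y ∈ Q then (1 : ℝ) else 0) - (if x ∈ Q then 1 else 0)| ≤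
      (if x ∈ outerBoundary d K Q then 1 else 0) + if y ∈ outerBoundary d K Q then 1 else 0 := by
  have mem_of_near {z w : Fin d → ℕ} (hz : z ∈ latticeBox d K) (hzQ : z ∉ Q) (hw : w ∈ Q)
      (hzw : Near z w) : z ∈ outerBoundary d K Q :=
    mem_filter.2 ⟨hz, hzQ, w, hw, hzw⟩
  have not_mem_of_mem {z : Fin d → ℕ} (hz : z ∈ Q) : z ∉ outerBoundary d K Q :=
    fun h => (mem_filter.1 h).2.1 hz
  by_cases hxQ : x ∈ Q <;> by_cases hyQ : y ∈ Q
  · simp [hxQ, hyQ, not_mem_of_mem]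
  · simp [hxQ, hyQ, not_mem_of_mem, mem_of_near hy hyQ hxQ hxy.symm]
  · simp [hxQ, hyQ, not_mem_of_mem, mem_of_near hx hxQ hyQ hxy]
  · simp only [hxQ, hyQ, if_false, sub_self, abs_zero]
    positivity

lemma gridVariation_indicator_le (Q : Finset (Fin d → ℕ)) :
    gridVariation d K (fun x => if x ∈ Q then 1 else 0) ≤ 2 * d * #(outerBoundary d K Q) := by
  set D := outerBoundary d K Q
  have direction_le (i : Fin d) : (∑ x ∈ latticeBox d K with x i + 1 < K,
      |(if x + Pi.single i 1 ∈ Q then (1 : ℝ) else 0) - (if x ∈ Q then 1 else 0)|) ≤ 2 * #D := by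
    set E := {x ∈ latticeBox d K | x i + 1 < K}
    calc _ ≤ ∑ x ∈ E, ((if x ∈ D then (1 : ℝ) else 0) +
            if x + Pi.single i 1 ∈ D then 1 else 0) := by
          refine sum_le_sum fun x hx => ?_
          obtain ⟨hx, hxi⟩ := mem_filter.1 hx
          exact abs_indicator_sub_le hx (add_single_mem_latticeBox hx hxi) (near_add_single x i)
      _ = #{x ∈ E | x ∈ D} + #{x ∈ E | x + Pi.single i 1 ∈ D} := by
          rw [sum_add_distrib, sum_boole, sum_boole]
      _ ≤ #D + #D := by
          refine add_le_add (Nat.cast_le.2 (card_le_card fun x hx => (mem_filter.1 hx).2))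
            (Nat.cast_le.2 (card_le_card_of_injOn (· + Pi.single i 1)
              (fun x hx => (mem_filter.1 hx).2) ?_))
          exact (add_left_injective (Pi.single i 1 : Fin d → ℕ)).injOn
      _ = 2 * #D := (two_mul _).symm
  refine (sum_le_sum fun i _ => direction_le i).trans_eq ?_
  rw [sum_const, card_univ, Fintype.card_fin, nsmul_eq_mul]
  ring

end DiscreteVariation

section Cells

open Finset

variable {d n K M : ℕ}

/-- The index in `latticeBox d K` of the cell containing `x`, when `{1, …, M}^d` is cut into `K^d`
cells of side `M / K`: coordinatewise, `q ≤ (x - 1) * K / M < q + 1`. -/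
def cell (K M : ℕ) (x : Fin d → ℤ) : Fin d → ℕ := fun i => (x i - 1).toNat * K / M

/-- The number of points of `S` in the cell `q` of the subdivision of `{1, …, M}^d` into `K^d`
cells. -/
def cellCard (K M : ℕ) (S : Finset (Fin d → ℤ)) (q : Fin d → ℕ) : ℕ := #{x ∈ S | cell K M x = q}

lemma mem_grid {x : Fin d → ℤ} : x ∈ grid d M ↔ ∀ i, 1 ≤ x i ∧ x i ≤ M := by
  simp [grid]

lemma card_grid (d M : ℕ) : #(grid d M) = M ^ d := by
  simp [grid]

lemma cell_mem_latticeBox (hK : 0 < K) {x : Fin d → ℤ} (hx : x ∈ grid d M) :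
    cell K M x ∈ latticeBox d K := by
  refine mem_latticeBox.2 fun i => ?_
  have hxi := mem_grid.1 hx i
  have hM : 0 < M := by omega
  rw [cell, Nat.div_lt_iff_lt_mul hM, mul_comm]
  exact Nat.mul_lt_mul_of_pos_left (by omega) hK

lemma cellCard_one_zero {S : Finset (Fin d → ℤ)} (hS : S ⊆ grid d M) : cellCard 1 M S 0 = #S := by
  rw [cellCard, filter_true_of_mem]
  intro x hx
  funext i
  exact Nat.lt_one_iff.1 (mem_latticeBox.1 (cell_mem_latticeBox one_pos (hS hx)) i)

lemma cell_two_mul_div_two (x : Fin d → ℤ) (i : Fin d) :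
    cell (2 * K) M x i / 2 = cell K M x i := by
  rw [cell, cell, Nat.div_div_eq_div_mul, mul_left_comm, mul_comm M 2,
    Nat.mul_div_mul_left _ _ two_pos]

lemma cellCard_eq_sum_child (S : Finset (Fin d → ℤ)) (q : Fin d → ℕ) :
    cellCard K M S q = ∑ e : Fin d → Fin 2, cellCard (2 * K) M S (child q e) := by
  simp_rw [cellCard, eq_child_iff, cell_two_mul_div_two, ← filter_filter]
  exact card_eq_sum_card_fiberwise fun _ _ => mem_univ _

lemma rescaled_sub_one_mem_Icc_cell (hK : 0 < K) {x : Fin d → ℤ} (hx : x ∈ grid d M)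
    (i : Fin d) :
    ((x i : ℝ) - 1) * (n / M) ∈
      Set.Icc (cell K M x i * ((n : ℝ) / K)) ((cell K M x i + 1) * ((n : ℝ) / K)) := by
  have hxi := mem_grid.1 hx i
  have hM : 0 < M := by omega
  have hM' : (0 : ℝ) < M := by exact_mod_cast hM
  have : (0 : ℝ) < K := by exact_mod_cast hK
  obtain ⟨t, ht⟩ : ∃ t : ℕ, x i - 1 = t := ⟨(x i - 1).toNat, by omega⟩
  have cell_eq : cell K M x i = t * K / M := by rw [cell, ht, Int.toNat_natCast]
  have lower : (cell K M x i : ℝ) ≤ t * K / M := by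
    rw [cell_eq]
    exact_mod_cast Nat.cast_div_le (α := ℝ) (m := t * K) (n := M)
  have upper : (t * K / M : ℝ) ≤ cell K M x i + 1 := by
    rw [cell_eq, div_le_iff₀ hM']
    exact_mod_cast (add_one_mul (t * K / M) M ▸ Nat.lt_div_mul_add hM).le
  have rescaled : ((x i : ℝ) - 1) * (n / M) = t * K / M * ((n : ℝ) / K) := by
    rw [show (x i : ℝ) - 1 = t by exact_mod_cast ht]
    field_simp
  rw [rescaled]
  exact ⟨by gcongr, by gcongr⟩

lemma abs_rescaled_sub_le_of_near (hn : 0 < n) (hK : 0 < K) {x y : Fin d → ℤ} (hx : x ∈ grid d M)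
    (hy : y ∈ grid d n) (hyx : Near (cell K n y) (cell K M x)) (i : Fin d) :
    |((x i : ℝ) - 1) * (n / M) - ((y i : ℝ) - 1)| ≤ 2 * ((n : ℝ) / K) := by
  obtain ⟨x_lower, x_upper⟩ := rescaled_sub_one_mem_Icc_cell (n := n) hK hx i
  obtain ⟨y_lower, y_upper⟩ := rescaled_sub_one_mem_Icc_cell (n := n) hK hy i
  have hn' : (n : ℝ) ≠ 0 := by exact_mod_cast hn.ne'
  rw [div_self hn', mul_one] at y_lower y_upper
  have near_left : (cell K n y i : ℝ) ≤ cell K M x i + 1 := by exact_mod_cast (hyx i).1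
  have near_right : (cell K M x i : ℝ) ≤ cell K n y i + 1 := by exact_mod_cast (hyx i).2
  have side_nonneg : 0 ≤ (n : ℝ) / K := by positivity
  rw [abs_le]
  constructor <;> nlinarith [side_nonneg]

end Cells

section CellCounts

open Finset

variable {d n K M : ℕ}

lemma mul_div_eq_iff_mem_Ico_ceil {q t : ℕ} (hM : 0 < M) (hK : 0 < K) :
    t * K / M = q ↔ t ∈ Ico ⌈(q * M / K : ℝ)⌉₊ ⌈((q + 1) * M / K : ℝ)⌉₊ := by
  have hK' : (0 : ℝ) < K := by exact_mod_cast hK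
  rw [mem_Ico, Nat.ceil_le, Nat.lt_ceil, div_le_iff₀ hK', lt_div_iff₀ hK', Nat.div_eq_iff hM]
  norm_cast
  rw [add_one_mul]
  omega

/-- The number of `x ∈ {1, …, M}` in the `q`-th of `K` consecutive intervals of length `M / K`;
the one-dimensional case of `cellCard K M (grid d M)`. -/
noncomputable def slabCard (K M q : ℕ) : ℕ := #{x ∈ Icc (1 : ℤ) M | (x - 1).toNat * K / M = q}

lemma slabCard_eq_card_Ico {q : ℕ} (hM : 0 < M) (hq : q < K) :
    slabCard K M q = #(Ico ⌈(q * M / K : ℝ)⌉₊ ⌈((q + 1) * M / K : ℝ)⌉₊) := by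
  have hK : 0 < K := by omega
  refine card_nbij' (fun x => (x - 1).toNat) (fun t => (t : ℤ) + 1) ?_ ?_ ?_ ?_
  · intro x hx
    exact (mul_div_eq_iff_mem_Ico_ceil hM hK).1 (mem_filter.1 hx).2
  · intro t ht
    have ht_div := (mul_div_eq_iff_mem_Ico_ceil hM hK).2 ht
    have htM : t < M := by
      have : t * K < K * M := (Nat.div_lt_iff_lt_mul hM).1 (ht_div ▸ hq)
      rw [mul_comm] at this
      exact Nat.lt_of_mul_lt_mul_left this
    refine mem_filter.2 ⟨mem_Icc.2 ?_, by simpa using ht_div⟩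
    dsimp only
    omega
  · intro x hx
    have := mem_Icc.1 (mem_filter.1 hx).1
    simp only
    omega
  · intro t _
    simp

lemma abs_slabCard_sub_le {q : ℕ} (hM : 0 < M) (hq : q < K) :
    |(slabCard K M q : ℝ) - M / K| ≤ 1 := by
  have slab_length : ((q + 1) * M / K : ℝ) = q * M / K + M / K := by ring
  have length_nonneg : 0 ≤ (M : ℝ) / K := by positivity
  have start_nonneg : 0 ≤ (q * M / K : ℝ) := by positivity
  rw [slabCard_eq_card_Ico hM hq, Nat.card_Ico, slab_length]
  set a : ℝ := q * M / K
  set b : ℝ := a + M / K with hb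
  rw [Nat.cast_sub (Nat.ceil_mono (by linarith)), abs_le]
  have := Nat.ceil_lt_add_one start_nonneg
  have := Nat.ceil_lt_add_one (a := b) (by linarith)
  constructor <;> linarith [hb, Nat.le_ceil a, Nat.le_ceil b]

lemma cellCard_grid (K M : ℕ) (q : Fin d → ℕ) :
    cellCard K M (grid d M) q = ∏ i, slabCard K M (q i) := by
  simp only [slabCard]
  rw [← Fintype.card_piFinset, cellCard]
  congr 1
  ext x
  simp only [grid, mem_filter, Fintype.mem_piFinset, cell, funext_iff, forall_and]

section Products

variable {ι : Type*} [Fintype ι] {t : ι → ℝ} {ρ : ℝ}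

lemma sub_one_pow_le_prod (hρ : 1 ≤ ρ) (ht : ∀ i, |t i - ρ| ≤ 1) :
    (ρ - 1) ^ Fintype.card ι ≤ ∏ i, t i := by
  rw [← card_univ, ← prod_const]
  exact prod_le_prod (fun _ _ => by linarith) fun i _ => by linarith [(abs_le.1 (ht i)).1]

lemma prod_le_add_one_pow (hρ : 1 ≤ ρ) (ht : ∀ i, |t i - ρ| ≤ 1) :
    ∏ i, t i ≤ (ρ + 1) ^ Fintype.card ι := by
  rw [← card_univ, ← prod_const]
  exact prod_le_prod (fun i _ => by linarith [(abs_le.1 (ht i)).1])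
    fun i _ => by linarith [(abs_le.1 (ht i)).2]

lemma pow_sub_pow_le_of_sub_le_one {x y : ℝ} (hy : 0 ≤ y) (hyx : y ≤ x) (hxy : x - y ≤ 1)
    (hx : x ≤ 2 * ρ) (m : ℕ) : x ^ m - y ^ m ≤ m * (2 * ρ) ^ (m - 1) := by
  have h0x : 0 ≤ x := hy.trans hyx
  calc x ^ m - y ^ m ≤ |x - y| * m * max |x| |y| ^ (m - 1) :=
        (le_abs_self _).trans (abs_pow_sub_pow_le x y m)
    _ = (x - y) * m * x ^ (m - 1) := by
        rw [abs_of_nonneg (sub_nonneg.2 hyx), abs_of_nonneg h0x, abs_of_nonneg hy,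
          max_eq_left hyx]
    _ ≤ 1 * m * (2 * ρ) ^ (m - 1) := by gcongr
    _ = m * (2 * ρ) ^ (m - 1) := by rw [one_mul]

lemma abs_prod_sub_pow_le (hρ : 1 ≤ ρ) (ht : ∀ i, |t i - ρ| ≤ 1) :
    |∏ i, t i - ρ ^ Fintype.card ι| ≤ Fintype.card ι * (2 * ρ) ^ (Fintype.card ι - 1) := by
  have upper := pow_sub_pow_le_of_sub_le_one (ρ := ρ) (x := ρ + 1) (y := ρ)
    (by linarith) (by linarith) (by linarith) (by linarith) (Fintype.card ι)
  have lower := pow_sub_pow_le_of_sub_le_one (ρ := ρ) (x := ρ) (y := ρ - 1)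
    (by linarith) (by linarith) (by linarith) (by linarith) (Fintype.card ι)
  rw [abs_le]
  constructor <;> linarith [sub_one_pow_le_prod hρ ht, prod_le_add_one_pow hρ ht]

end Products

/-- The expected number of points in the cell `q` when each point of `{1, …, M}^d` is kept with
probability `(n / M)^d`. For `n = M` it is the number of points of `{1, …, n}^d` in the cell. -/
noncomputable def meanCellCard (n M K : ℕ) (q : Fin d → ℕ) : ℝ :=
  cellCard K M (grid d M) q * ((n : ℝ) / M) ^ d

lemma meanCellCard_self (hn : 0 < n) (K : ℕ) (q : Fin d → ℕ) :
    meanCellCard n n K q = cellCard K n (grid d n) q := by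
  rw [meanCellCard, div_self (by exact_mod_cast hn.ne'), one_pow, mul_one]

lemma meanCellCard_eq_prod (n M K : ℕ) (q : Fin d → ℕ) :
    meanCellCard n M K q = ∏ i, slabCard K M (q i) * ((n : ℝ) / M) := by
  rw [meanCellCard, cellCard_grid, prod_mul_distrib, prod_const, card_univ, Fintype.card_fin,
    Nat.cast_prod]

lemma abs_slabCard_mul_sub_le {q : ℕ} (hM : 0 < M) (hnM : n ≤ M) (hq : q < K) :
    |slabCard K M q * ((n : ℝ) / M) - n / K| ≤ 1 := by
  have hM' : (0 : ℝ) < M := by exact_mod_cast hM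
  have ratio_le_one : (n : ℝ) / M ≤ 1 := (div_le_one hM').2 (by exact_mod_cast hnM)
  have factor : slabCard K M q * ((n : ℝ) / M) - n / K =
      (slabCard K M q - M / K) * ((n : ℝ) / M) := by
    field_simp
  rw [factor, abs_mul, abs_of_nonneg (by positivity : 0 ≤ (n : ℝ) / M)]
  exact mul_le_one₀ (abs_slabCard_sub_le hM hq) (by positivity) ratio_le_one

variable {q : Fin d → ℕ}

lemma abs_meanCellCard_sub_le (hM : 0 < M) (hnM : n ≤ M) (hK : (1 : ℝ) ≤ n / K)
    (hq : q ∈ latticeBox d K) :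
    |meanCellCard n M K q - ((n : ℝ) / K) ^ d| ≤ d * (2 * ((n : ℝ) / K)) ^ (d - 1) := by
  simpa [meanCellCard_eq_prod] using
    abs_prod_sub_pow_le hK fun i => abs_slabCard_mul_sub_le hM hnM (mem_latticeBox.1 hq i)

lemma sub_one_pow_le_meanCellCard (hM : 0 < M) (hnM : n ≤ M) (hK : (1 : ℝ) ≤ n / K)
    (hq : q ∈ latticeBox d K) : ((n : ℝ) / K - 1) ^ d ≤ meanCellCard n M K q := by
  simpa [meanCellCard_eq_prod] using
    sub_one_pow_le_prod hK fun i => abs_slabCard_mul_sub_le hM hnM (mem_latticeBox.1 hq i)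

lemma meanCellCard_le (hM : 0 < M) (hnM : n ≤ M) (hK : (1 : ℝ) ≤ n / K)
    (hq : q ∈ latticeBox d K) : meanCellCard n M K q ≤ (2 * ((n : ℝ) / K)) ^ d := by
  have prod_le := prod_le_add_one_pow hK fun i =>
    abs_slabCard_mul_sub_le hM hnM (mem_latticeBox.1 hq i)
  rw [meanCellCard_eq_prod]
  rw [Fintype.card_fin] at prod_le
  exact prod_le.trans (pow_le_pow_left₀ (by linarith) (by linarith) d)

end CellCounts

section LipschitzConstant

open Finset

variable {d n : ℕ} {S : Finset (Fin d → ℤ)} {f : (Fin d → ℤ) → Fin d → ℤ}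

lemma abs_sub_le_zdist (x y : Fin d → ℤ) (i : Fin d) : |(x i : ℝ) - y i| ≤ zdist x y :=
  Real.abs_le_sqrt (single_le_sum (f := fun i => ((x i : ℝ) - y i) ^ 2)
    (fun _ _ => sq_nonneg _) (mem_univ i))

lemma one_le_zdist {x y : Fin d → ℤ} (hxy : x ≠ y) : 1 ≤ zdist x y := by
  obtain ⟨i, hi⟩ := Function.ne_iff.1 hxy
  refine le_trans ?_ (abs_sub_le_zdist x y i)
  exact_mod_cast Int.one_le_abs (sub_ne_zero.2 hi)

lemma zdist_le_mul {x y : Fin d → ℤ} {R : ℝ} (hR : 0 ≤ R) (h : ∀ i, |(x i : ℝ) - y i| ≤ R) :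
    zdist x y ≤ d * R := by
  rw [zdist, Real.sqrt_le_left (by positivity)]
  calc ∑ i, ((x i : ℝ) - y i) ^ 2 ≤ ∑ _i : Fin d, R ^ 2 :=
        sum_le_sum fun i _ => sq_le_sq.2 ((h i).trans (le_abs_self R))
    _ = d * R ^ 2 := by rw [sum_const, card_univ, Fintype.card_fin, nsmul_eq_mul]
    _ ≤ d ^ 2 * R ^ 2 := by
        gcongr
        exact_mod_cast Nat.le_self_pow two_ne_zero d
    _ = (d * R) ^ 2 := (mul_pow _ _ _).symm

/- If `S` has at most one point, every real `L` is admissible and the infimum takes the junk value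
`0`; this is why `0 ≤ L` is required. -/
lemma Fleast_le {L : ℝ} (hL : 0 ≤ L) (hf_maps : ∀ x ∈ S, f x ∈ grid d n)
    (hf_surj : ∀ y ∈ grid d n, ∃ x ∈ S, f x = y)
    (hf_lip : ∀ x ∈ S, ∀ y ∈ S, zdist (f x) (f y) ≤ L * zdist x y) : Fleast d n S ≤ L := by
  rw [Fleast]
  set admissible := {L : ℝ | ∃ f : (Fin d → ℤ) → (Fin d → ℤ), (∀ x ∈ S, f x ∈ grid d n) ∧
    (∀ y ∈ grid d n, ∃ x ∈ S, f x = y) ∧ ∀ x ∈ S, ∀ y ∈ S, zdist (f x) (f y) ≤ L * zdist x y}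
  by_cases hbdd : BddBelow admissible
  · exact csInf_le hbdd ⟨f, hf_maps, hf_surj, hf_lip⟩
  · rwa [Real.sInf_of_not_bddBelow hbdd]

/- Distinct lattice points are at distance at least `1`, so an additive error becomes a
multiplicative one. -/
lemma Fleast_le_of_displacement_le {r R : ℝ} (hr0 : 0 ≤ r) (hr1 : r ≤ 1) (hR : 0 ≤ R)
    (hf_maps : ∀ x ∈ S, f x ∈ grid d n) (hf_surj : ∀ y ∈ grid d n, ∃ x ∈ S, f x = y)
    (hf_close : ∀ x ∈ S, ∀ i, |((x i : ℝ) - 1) * r - ((f x i : ℝ) - 1)| ≤ R) :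
    Fleast d n S ≤ d * (2 * R + 1) := by
  refine Fleast_le (by positivity) hf_maps hf_surj fun x hx y hy => ?_
  rcases eq_or_ne x y with rfl | hxy
  · simp [zdist]
  have one_le := one_le_zdist hxy
  rw [mul_assoc]
  refine zdist_le_mul (by positivity) fun i => ?_
  have shrink : |((x i : ℝ) - y i) * r| ≤ zdist x y := by
    rw [abs_mul, abs_of_nonneg hr0]
    exact (mul_le_of_le_one_right (abs_nonneg _) hr1).trans (abs_sub_le_zdist x y i)
  have error_le : 2 * R ≤ 2 * R * zdist x y := le_mul_of_one_le_right (by linarith) one_le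
  obtain ⟨x_lower, x_upper⟩ := abs_le.1 (hf_close x hx i)
  obtain ⟨y_lower, y_upper⟩ := abs_le.1 (hf_close y hy i)
  obtain ⟨shrink_lower, shrink_upper⟩ := abs_le.1 shrink
  rw [abs_le]
  constructor <;> linarith

end LipschitzConstant

section Matching

open Finset

variable {d n M k : ℕ} {β : ℝ} {S : Finset (Fin d → ℤ)}

/-- Down to scale `2^k`, the cells of `{1, …, M}^d` contain as many points of `S` as the
corresponding cells of `{1, …, n}^d` contain grid points, up to `β` at the finest scale and up to
an error proportional to the surface area of the cell at coarser scales. -/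
def DyadicallyBalanced (n M k : ℕ) (β : ℝ) (S : Finset (Fin d → ℤ)) : Prop :=
  ∀ κ ≤ k, ∀ q ∈ latticeBox d (2 ^ κ),
    |(cellCard (2 ^ κ) M S q : ℝ) - cellCard (2 ^ κ) n (grid d n) q| ≤
      β * (2 ^ (d - 1)) ^ (k - κ)

namespace DyadicallyBalanced

lemma nonneg (hbal : DyadicallyBalanced n M k β S) : 0 ≤ β := by
  simpa using (abs_nonneg _).trans (hbal k le_rfl 0 (mem_latticeBox.2 fun _ => by simp))

lemma sum_cellCard_le (hbal : DyadicallyBalanced n M k β S) (hd : 1 ≤ d) (hS : S ⊆ grid d M)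
    (hcard : #S = n ^ d) {Q : Finset (Fin d → ℕ)} (hQ : Q ⊆ latticeBox d (2 ^ k)) :
    (∑ q ∈ Q, cellCard (2 ^ k) M S q : ℝ) ≤ ∑ q ∈ Q, (cellCard (2 ^ k) n (grid d n) q : ℝ) +
      k * 2 ^ (d + 1) * β * (2 * d * #(outerBoundary d (2 ^ k) Q)) := by
  set discrepancy : ℕ → (Fin d → ℕ) → ℝ := fun κ q =>
    cellCard (2 ^ κ) M S q - cellCard (2 ^ κ) n (grid d n) q with hdisc
  have root : discrepancy 0 0 = 0 := by
    simp only [hdisc, pow_zero]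
    rw [cellCard_one_zero hS, cellCard_one_zero subset_rfl, hcard, card_grid, sub_self]
  have refine_cell (κ : ℕ) (q : Fin d → ℕ) :
      discrepancy κ q = ∑ e : Fin d → Fin 2, discrepancy (κ + 1) (child q e) := by
    simp only [hdisc, pow_succ']
    rw [cellCard_eq_sum_child, cellCard_eq_sum_child, sum_sub_distrib, Nat.cast_sum, Nat.cast_sum]
  have multiscale := abs_sum_mul_le_gridVariation hd root (fun κ _ q _ => refine_cell κ q) hbal
    le_rfl fun x => if x ∈ Q then 1 else 0
  simp only [ite_mul, one_mul, zero_mul, sum_ite_mem, inter_eq_right.2 hQ, hdisc, sum_sub_distrib,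
    Nat.sub_self, pow_zero, mul_one] at multiscale
  have variation_le :
      k * 2 ^ (d + 1) * β * gridVariation d (2 ^ k) (fun x => if x ∈ Q then 1 else 0) ≤
        k * 2 ^ (d + 1) * β * (2 * d * #(outerBoundary d (2 ^ k) Q)) := by
    have := hbal.nonneg
    gcongr
    exact gridVariation_indicator_le Q
  linarith [le_abs_self (∑ q ∈ Q, (cellCard (2 ^ k) M S q : ℝ) -
    ∑ q ∈ Q, (cellCard (2 ^ k) n (grid d n) q : ℝ))]

/- Every boundary cell of the small grid holds enough points to absorb the discrepancy. -/
lemma sum_cellCard_le_sum_union_outerBoundary (hbal : DyadicallyBalanced n M k β S) (hd : 1 ≤ d)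
    (hS : S ⊆ grid d M) (hcard : #S = n ^ d) (hn : 0 < n) (hk : (1 : ℝ) ≤ n / 2 ^ k)
    (hβ : k * 2 ^ (d + 1) * β * (2 * d) ≤ ((n : ℝ) / 2 ^ k - 1) ^ d)
    {Q : Finset (Fin d → ℕ)} (hQ : Q ⊆ latticeBox d (2 ^ k)) :
    ∑ q ∈ Q, cellCard (2 ^ k) M S q ≤
      ∑ q ∈ Q ∪ outerBoundary d (2 ^ k) Q, cellCard (2 ^ k) n (grid d n) q := by
  set D := outerBoundary d (2 ^ k) Q
  have disjoint_boundary : Disjoint Q D :=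
    disjoint_right.2 fun _ hq => (mem_filter.1 hq).2.1
  have boundary_mass : (#D : ℝ) * ((n : ℝ) / 2 ^ k - 1) ^ d ≤
      ∑ q ∈ D, (cellCard (2 ^ k) n (grid d n) q : ℝ) := by
    rw [← nsmul_eq_mul, ← sum_const]
    refine sum_le_sum fun q hq => ?_
    rw [← meanCellCard_self hn]
    exact_mod_cast sub_one_pow_le_meanCellCard (K := 2 ^ k) hn le_rfl (by exact_mod_cast hk)
      (mem_filter.1 hq).1
  have discrepancy_le : k * 2 ^ (d + 1) * β * (2 * d * #D) ≤
      #D * ((n : ℝ) / 2 ^ k - 1) ^ d := by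
    calc k * 2 ^ (d + 1) * β * (2 * d * #D) = #D * (k * 2 ^ (d + 1) * β * (2 * d)) := by ring
      _ ≤ _ := by gcongr
  rw [sum_union disjoint_boundary]
  rify
  linarith [hbal.sum_cellCard_le hd hS hcard hQ]

lemma card_le_card_near (hbal : DyadicallyBalanced n M k β S) (hd : 1 ≤ d)
    (hS : S ⊆ grid d M) (hcard : #S = n ^ d) (hn : 0 < n) (hk : (1 : ℝ) ≤ n / 2 ^ k)
    (hβ : k * 2 ^ (d + 1) * β * (2 * d) ≤ ((n : ℝ) / 2 ^ k - 1) ^ d)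
    {A : Finset (Fin d → ℤ)} (hA : A ⊆ S) :
    #A ≤ #{y ∈ grid d n | ∃ x ∈ A, Near (cell (2 ^ k) n y) (cell (2 ^ k) M x)} := by
  set Q := A.image (cell (2 ^ k) M)
  have hQ : Q ⊆ latticeBox d (2 ^ k) :=
    image_subset_iff.2 fun x hx => cell_mem_latticeBox (by positivity) (hS (hA hx))
  calc #A ≤ #{x ∈ S | cell (2 ^ k) M x ∈ Q} :=
        card_le_card fun x hx => mem_filter.2 ⟨hA hx, mem_image_of_mem _ hx⟩
    _ = ∑ q ∈ Q, cellCard (2 ^ k) M S q := (sum_card_fiberwise_eq_card_filter _ _ _).symm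
    _ ≤ ∑ q ∈ Q ∪ outerBoundary d (2 ^ k) Q, cellCard (2 ^ k) n (grid d n) q :=
        hbal.sum_cellCard_le_sum_union_outerBoundary hd hS hcard hn hk hβ hQ
    _ = #{y ∈ grid d n | cell (2 ^ k) n y ∈ Q ∪ outerBoundary d (2 ^ k) Q} :=
        sum_card_fiberwise_eq_card_filter _ _ _
    _ ≤ _ := by
        refine card_le_card fun y hy => ?_
        obtain ⟨hy, hyQ⟩ := mem_filter.1 hy
        refine mem_filter.2 ⟨hy, ?_⟩
        rcases mem_union.1 hyQ with hyQ | hyQ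
        · obtain ⟨x, hx, hxy⟩ := mem_image.1 hyQ
          exact ⟨x, hx, fun i => by rw [hxy]; omega⟩
        · obtain ⟨-, -, q, hq, hyq⟩ := mem_filter.1 hyQ
          obtain ⟨x, hx, rfl⟩ := mem_image.1 hq
          exact ⟨x, hx, hyq⟩

lemma exists_injOn_near (hbal : DyadicallyBalanced n M k β S) (hd : 1 ≤ d)
    (hS : S ⊆ grid d M) (hcard : #S = n ^ d) (hn : 0 < n) (hk : (1 : ℝ) ≤ n / 2 ^ k)
    (hβ : k * 2 ^ (d + 1) * β * (2 * d) ≤ ((n : ℝ) / 2 ^ k - 1) ^ d) :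
    ∃ f : (Fin d → ℤ) → Fin d → ℤ, Set.InjOn f S ∧
      ∀ x ∈ S, f x ∈ grid d n ∧ Near (cell (2 ^ k) n (f x)) (cell (2 ^ k) M x) := by
  set targets : S → Finset (Fin d → ℤ) := fun x =>
    {y ∈ grid d n | Near (cell (2 ^ k) n y) (cell (2 ^ k) M x)}
  have hall (A : Finset S) : #A ≤ #(A.biUnion targets) := by
    rw [← card_map (Function.Embedding.subtype _)]
    refine (hbal.card_le_card_near hd hS hcard hn hk hβ (map_subtype_subset A)).trans
      (card_le_card fun y hy => ?_)
    obtain ⟨hy, x, hx, hyx⟩ := mem_filter.1 hy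
    obtain ⟨x, hxA, rfl⟩ := mem_map.1 hx
    exact mem_biUnion.2 ⟨x, hxA, mem_filter.2 ⟨hy, hyx⟩⟩
  obtain ⟨g, g_inj, g_mem⟩ := (all_card_le_biUnion_card_iff_exists_injective targets).1 hall
  have extend_apply (x : S) : Function.extend Subtype.val g 0 x = g x :=
    Subtype.val_injective.extend_apply g 0 x
  refine ⟨Function.extend Subtype.val g 0, fun x hx y hy hxy => ?_, fun x hx => ?_⟩
  · rw [extend_apply ⟨x, hx⟩, extend_apply ⟨y, hy⟩] at hxy
    exact congrArg Subtype.val (g_inj hxy)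
  · rw [extend_apply ⟨x, hx⟩]
    exact mem_filter.1 (g_mem ⟨x, hx⟩)

lemma Fleast_le (hbal : DyadicallyBalanced n M k β S) (hd : 1 ≤ d)
    (hS : S ⊆ grid d M) (hcard : #S = n ^ d) (hn : 0 < n) (hnM : n ≤ M)
    (hk : (1 : ℝ) ≤ n / 2 ^ k)
    (hβ : k * 2 ^ (d + 1) * β * (2 * d) ≤ ((n : ℝ) / 2 ^ k - 1) ^ d) :
    Fleast d n S ≤ d * (4 * ((n : ℝ) / 2 ^ k) + 1) := by
  obtain ⟨f, f_inj, hf⟩ := hbal.exists_injOn_near hd hS hcard hn hk hβ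
  have f_surj : Set.SurjOn f S (grid d n) :=
    surjOn_of_injOn_of_card_le f (fun x hx => (hf x hx).1) f_inj (by rw [card_grid, hcard])
  have hM : (0 : ℝ) < M := by exact_mod_cast hn.trans_le hnM
  have displacement := Fleast_le_of_displacement_le (r := n / M) (R := 2 * (n / 2 ^ k))
    (by positivity) ((div_le_one hM).2 (by exact_mod_cast hnM)) (by positivity)
    (fun x hx => (hf x hx).1) f_surj fun x hx i => by
      simpa using abs_rescaled_sub_le_of_near hn (by positivity) (hS hx) (hf x hx).1 (hf x hx).2 i
  linarith

end DyadicallyBalanced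

end Matching

section Configurations

open Finset

variable {d n K M : ℕ}

lemma injective_gridPt_coe {m : ℤ} :
    Function.Injective fun (x : gridPt d m) (i : Fin d) => (x i : ℤ) :=
  fun _ _ h => funext fun i => Subtype.ext (congrFun h i)

lemma card_toLattice {m : ℤ} (S : Finset (gridPt d m)) : #(toLattice S) = #S :=
  card_image_of_injective S injective_gridPt_coe

lemma toLattice_subset_grid (S : Finset (gridPt d (M : ℤ))) : toLattice S ⊆ grid d M :=
  image_subset_iff.2 fun x _ => Fintype.mem_piFinset.2 fun i => (x i).2

lemma card_gridPt (d M : ℕ) : Fintype.card (gridPt d (M : ℤ)) = M ^ d := by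
  simp

lemma toLattice_univ (d M : ℕ) : toLattice (univ : Finset (gridPt d (M : ℤ))) = grid d M :=
  eq_of_subset_of_card_le (toLattice_subset_grid _)
    (by rw [card_toLattice, card_grid, card_univ, card_gridPt])

lemma card_config (d M N : ℕ) : Fintype.card (Config d (M : ℤ) N) = (M ^ d).choose N := by
  rw [← card_gridPt d M]
  exact Fintype.card_finset_len N

/-- The points of the cell `q`, as a subset of the finite type `gridPt d M` on which the
configurations live. -/
noncomputable def cellPoints (K M : ℕ) (q : Fin d → ℕ) : Finset (gridPt d (M : ℤ)) :=
  {x | cell K M (fun i => (x i : ℤ)) = q}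

lemma cellCard_toLattice (S : Finset (gridPt d (M : ℤ))) (q : Fin d → ℕ) :
    cellCard K M (toLattice S) q = #(S ∩ cellPoints K M q) := by
  rw [cellCard, toLattice, filter_image, card_image_of_injective _ injective_gridPt_coe,
    cellPoints, inter_filter, inter_univ]

lemma expectedCard_cellPoints (n K M : ℕ) (q : Fin d → ℕ) :
    expectedCard (cellPoints K M q) (n ^ d) = meanCellCard n M K q := by
  rw [expectedCard, meanCellCard, card_gridPt, ← toLattice_univ, cellCard_toLattice, univ_inter]
  push_cast
  rw [div_pow]

/-- The `n^d`-point configurations whose number of points in the cell `q` deviates from its mean by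
more than `(n / K)^(d - 1)`, the order of the surface area of a cell of `{1, …, n}^d`. -/
noncomputable def irregularConfigs (n K M : ℕ) (q : Fin d → ℕ) :
    Finset (Finset (gridPt d (M : ℤ))) :=
  {S ∈ powersetCard (n ^ d) univ |
    ((n : ℝ) / K) ^ (d - 1) < |(cellCard K M (toLattice S) q : ℝ) - meanCellCard n M K q|}

lemma eight_pow_eq (d : ℕ) : (8 : ℝ) ^ d = 2 ^ d * 2 ^ d * 2 ^ d := by
  rw [← mul_pow, ← mul_pow]
  norm_num

lemma sq_one_div_mul_half_pow {ρ : ℝ} (hρ : 0 < ρ) (hd : 2 ≤ d) :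
    (1 / (2 ^ d * ρ)) ^ 2 * (ρ / 2) ^ d = ρ ^ (d - 2) / 8 ^ d := by
  rw [eight_pow_eq, div_pow ρ 2, ← Nat.sub_add_cancel hd, Nat.add_sub_cancel, pow_add ρ]
  field_simp

/- The Chernoff bound with relative deviation `δ = 1 / (2^d * (n / K))`. -/
lemma card_irregularConfigs_le_exp (hd : 2 ≤ d) (hnM : n ≤ M) (hK : (2 : ℝ) ≤ n / K)
    {q : Fin d → ℕ} (hq : q ∈ latticeBox d K) :
    (#(irregularConfigs n K M q) : ℝ) ≤
      (M ^ d).choose (n ^ d) * (2 * Real.exp (-(((n : ℝ) / K) ^ (d - 2) / (16 * 8 ^ d)))) := by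
  have hM : 0 < M := by
    rcases Nat.eq_zero_or_pos n with rfl | hn
    · norm_num at hK
    · omega
  have mean_le := meanCellCard_le hM hnM (by linarith) hq
  have le_mean := sub_one_pow_le_meanCellCard hM hnM (by linarith) hq
  have chernoff {δ : ℝ} := card_deviation_le (N := n ^ d) (δ := δ) (cellPoints K M q)
    (by rw [card_gridPt]; exact Nat.pow_le_pow_left hnM d)
  simp only [← cellCard_toLattice, expectedCard_cellPoints, card_gridPt] at chernoff
  rw [irregularConfigs]
  set ρ : ℝ := n / K
  obtain ⟨e, rfl⟩ : ∃ e, d = e + 2 := ⟨d - 2, by omega⟩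
  set δ : ℝ := 1 / (2 ^ (e + 2) * ρ) with hδ
  have hδ1 : δ ≤ 1 := by
    rw [hδ, div_le_one (by positivity)]
    nlinarith [one_le_pow₀ (M₀ := ℝ) one_le_two (n := e + 2)]
  have deviation_le : δ * meanCellCard n M K q ≤ ρ ^ (e + 2 - 1) := by
    calc δ * meanCellCard n M K q ≤ δ * (2 * ρ) ^ (e + 2) := by gcongr
      _ = ρ ^ (e + 2 - 1) := by
        rw [hδ, mul_pow, show e + 2 - 1 = e + 1 from rfl, pow_succ ρ (e + 1)]
        field_simp
  have exponent_le : ρ ^ (e + 2 - 2) / (16 * 8 ^ (e + 2)) ≤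
      δ ^ 2 * meanCellCard n M K q / 16 := by
    calc ρ ^ (e + 2 - 2) / (16 * 8 ^ (e + 2)) = δ ^ 2 * (ρ / 2) ^ (e + 2) / 16 := by
          rw [sq_one_div_mul_half_pow (by linarith) hd, div_div, mul_comm (16 : ℝ)]
      _ ≤ δ ^ 2 * (ρ - 1) ^ (e + 2) / 16 := by gcongr; linarith
      _ ≤ _ := by gcongr
  calc _ ≤ (#{S ∈ powersetCard (n ^ (e + 2)) (univ : Finset (gridPt (e + 2) (M : ℤ))) |
        δ * meanCellCard n M K q <
          |(cellCard K M (toLattice S) q : ℝ) - meanCellCard n M K q|} : ℝ) := by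
        gcongr
    _ ≤ _ := chernoff (by positivity) hδ1
    _ ≤ _ := by gcongr

end Configurations

section DyadicRegularity

open Finset Filter

variable {d n k M : ℕ}

/-- Cells of side `n / 2^k ≥ scaleConst d * log₂ n` are large enough both for the union bound over
all irregular configurations and for Hall's condition. -/
noncomputable def scaleConst (d : ℕ) : ℝ := 16 * 8 ^ d * (d + 3) ^ 2

lemma scaleConst_pos (d : ℕ) : 0 < scaleConst d := by
  rw [scaleConst]
  positivity

lemma two_le_scaleConst (d : ℕ) : 2 ≤ scaleConst d := by
  have one_le_eight_pow : (1 : ℝ) ≤ 8 ^ d := one_le_pow₀ (by norm_num)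
  have : (0 : ℝ) ≤ d := d.cast_nonneg
  rw [scaleConst]
  nlinarith [sq_nonneg (d : ℝ)]

lemma one_le_logb_two (hn : 2 ≤ n) : 1 ≤ Real.logb 2 n := by
  have hn' : (2 : ℝ) ≤ n := by exact_mod_cast hn
  rw [Real.le_logb_iff_rpow_le one_lt_two (by linarith), Real.rpow_one]
  exact hn'

lemma log_le_logb_two (hn : 1 ≤ n) : Real.log n ≤ Real.logb 2 n := by
  have log_nonneg : 0 ≤ Real.log n := Real.log_nonneg (by exact_mod_cast hn)
  rw [Real.logb, le_div_iff₀ (Real.log_pos one_lt_two)]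
  exact mul_le_of_le_one_right log_nonneg (by linarith [Real.log_two_lt_d9])

lemma two_le_of_scaleConst_mul_logb_le {ρ : ℝ} (hn : 2 ≤ n)
    (hρ : scaleConst d * Real.logb 2 n ≤ ρ) : 2 ≤ ρ := by
  nlinarith [two_le_scaleConst d, one_le_logb_two hn]

lemma card_irregularConfigs_le (hd : 3 ≤ d) (hn : 2 ≤ n) (hnM : n ≤ M) {K : ℕ}
    (hK : scaleConst d * Real.logb 2 n ≤ n / K) {q : Fin d → ℕ} (hq : q ∈ latticeBox d K) :
    (#(irregularConfigs n K M q) : ℝ) ≤ (M ^ d).choose (n ^ d) * (2 / (n : ℝ) ^ (d + 3)) := by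
  have two_le := two_le_of_scaleConst_mul_logb_le hn hK
  refine (card_irregularConfigs_le_exp (by omega) hnM two_le hq).trans ?_
  set ρ : ℝ := n / K
  have log_le : (d + 3 : ℕ) * Real.log n ≤ ρ ^ (d - 2) / (16 * 8 ^ d) := by
    have := log_le_logb_two (show 1 ≤ n by omega)
    have := one_le_logb_two hn
    rw [le_div_iff₀ (by positivity)]
    calc (d + 3 : ℕ) * Real.log n * (16 * 8 ^ d)
        ≤ ((d + 3 : ℕ) : ℝ) ^ 2 * Real.logb 2 n * (16 * 8 ^ d) := by
          gcongr
          exact_mod_cast Nat.le_self_pow two_ne_zero (d + 3)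
      _ = scaleConst d * Real.logb 2 n := by
          rw [scaleConst]
          push_cast
          ring
      _ ≤ ρ := hK
      _ ≤ ρ ^ (d - 2) := le_self_pow₀ (by linarith) (by omega)
  have pow_eq : (n : ℝ) ^ (d + 3) = Real.exp ((d + 3 : ℕ) * Real.log n) := by
    rw [Real.exp_nat_mul, Real.exp_log (by positivity)]
  rw [pow_eq, div_eq_mul_inv 2 (Real.exp _), ← Real.exp_neg]
  gcongr

lemma dyadicallyBalanced_of_notMem_irregularConfigs (hd : 1 ≤ d) (hn : 0 < n) (hnM : n ≤ M)
    (hk : (1 : ℝ) ≤ n / 2 ^ k) {S : Finset (gridPt d (M : ℤ))} (hS : #S = n ^ d)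
    (hreg : ∀ κ ≤ k, ∀ q ∈ latticeBox d (2 ^ κ), S ∉ irregularConfigs n (2 ^ κ) M q) :
    DyadicallyBalanced n M k ((1 + d * 2 ^ d) * ((n : ℝ) / 2 ^ k) ^ (d - 1)) (toLattice S) := by
  intro κ hκ q hq
  have side_eq : (n : ℝ) / (2 ^ κ : ℕ) = 2 ^ (k - κ) * (n / 2 ^ k) := by
    rw [← pow_sub_mul_pow 2 hκ]
    push_cast
    field_simp
  have one_le_side : (1 : ℝ) ≤ n / (2 ^ κ : ℕ) := by
    rw [side_eq]
    exact one_le_mul_of_one_le_of_one_le (one_le_pow₀ one_le_two) hk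
  have deviation_le : |(cellCard (2 ^ κ) M (toLattice S) q : ℝ) - meanCellCard n M (2 ^ κ) q| ≤
      ((n : ℝ) / (2 ^ κ : ℕ)) ^ (d - 1) :=
    not_lt.1 fun h => hreg κ hκ q hq (mem_filter.2 ⟨mem_powersetCard_univ.2 hS, h⟩)
  have mean_le := abs_meanCellCard_sub_le (hn.trans_le hnM) hnM one_le_side hq
  have grid_le := abs_meanCellCard_sub_le hn le_rfl one_le_side hq
  rw [meanCellCard_self hn, abs_sub_comm] at grid_le
  set ρ : ℝ := n / (2 ^ κ : ℕ)
  calc |(cellCard (2 ^ κ) M (toLattice S) q : ℝ) - cellCard (2 ^ κ) n (grid d n) q|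
      ≤ ρ ^ (d - 1) + d * (2 * ρ) ^ (d - 1) + d * (2 * ρ) ^ (d - 1) :=
        (abs_sub_le _ (ρ ^ d) _).trans
          (add_le_add ((abs_sub_le _ _ _).trans (add_le_add deviation_le mean_le)) grid_le)
    _ = (1 + d * 2 ^ d) * ρ ^ (d - 1) := by
        rw [← Nat.sub_add_cancel hd]
        simp only [Nat.add_sub_cancel, mul_pow]
        ring
    _ = _ := by
        rw [side_eq, mul_pow, ← pow_mul, ← pow_mul, mul_comm (k - κ)]
        ring

lemma hall_const_le_scaleConst (d : ℕ) :
    2 ^ (d + 1) * (1 + d * 2 ^ d) * (2 * d) * 2 ^ d ≤ scaleConst d := by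
  have one_le_two_pow : (1 : ℝ) ≤ 2 ^ d := one_le_pow₀ one_le_two
  calc (2 : ℝ) ^ (d + 1) * (1 + d * 2 ^ d) * (2 * d) * 2 ^ d
      ≤ 2 ^ (d + 1) * (2 ^ d + d * 2 ^ d) * (2 * d) * 2 ^ d := by gcongr
    _ = 8 ^ d * (4 * (d * (1 + d))) := by
        rw [eight_pow_eq]
        ring
    _ ≤ 8 ^ d * (16 * (d + 3) ^ 2) := by
        refine mul_le_mul_of_nonneg_left ?_ (by positivity)
        nlinarith [(d.cast_nonneg : (0 : ℝ) ≤ d)]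
    _ = scaleConst d := by
        rw [scaleConst]
        ring

lemma Fleast_toLattice_le_of_notMem_irregularConfigs (hd : 1 ≤ d) (hn : 2 ≤ n) (hnM : n ≤ M)
    (hk : scaleConst d * Real.logb 2 n ≤ n / 2 ^ k) {S : Finset (gridPt d (M : ℤ))}
    (hS : #S = n ^ d)
    (hreg : ∀ κ ≤ k, ∀ q ∈ latticeBox d (2 ^ κ), S ∉ irregularConfigs n (2 ^ κ) M q) :
    Fleast d n (toLattice S) ≤ d * (4 * ((n : ℝ) / 2 ^ k) + 1) := by
  have two_le := two_le_of_scaleConst_mul_logb_le hn hk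
  refine (dyadicallyBalanced_of_notMem_irregularConfigs hd (by omega) hnM (by linarith) hS
    hreg).Fleast_le hd (toLattice_subset_grid S) (by rw [card_toLattice, hS]) (by omega) hnM
    (by linarith) ?_
  have two_pow_le : (2 : ℝ) ^ k ≤ n := (one_le_div (by positivity)).1 (by linarith)
  have hkn : (k : ℝ) ≤ Real.logb 2 n := by
    rwa [Real.le_logb_iff_rpow_le one_lt_two (by positivity), Real.rpow_natCast]
  set l : ℝ := n / 2 ^ k
  calc k * 2 ^ (d + 1) * ((1 + d * 2 ^ d) * l ^ (d - 1)) * (2 * d)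
      = 2 ^ (d + 1) * (1 + d * 2 ^ d) * (2 * d) * 2 ^ d * k * (l ^ (d - 1) / 2 ^ d) := by
        field_simp
    _ ≤ scaleConst d * Real.logb 2 n * (l ^ (d - 1) / 2 ^ d) := by
        have := (scaleConst_pos d).le
        gcongr
        exact hall_const_le_scaleConst d
    _ ≤ l * (l ^ (d - 1) / 2 ^ d) := by gcongr
    _ = (l / 2) ^ d := by rw [← mul_div_assoc, mul_pow_sub_one (by omega), ← div_pow]
    _ ≤ (l - 1) ^ d := by gcongr; linarith

lemma card_biUnion_latticeBox_irregularConfigs_le (hd : 3 ≤ d) (hn : 2 ≤ n) (hnM : n ≤ M) {K : ℕ}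
    (hKn : K ≤ n) (hK : scaleConst d * Real.logb 2 n ≤ n / K) :
    (#((latticeBox d K).biUnion (irregularConfigs n K M)) : ℝ) ≤
      (M ^ d).choose (n ^ d) * (2 / (n : ℝ) ^ 3) := by
  have card_box_le : #(latticeBox d K) ≤ n ^ d := by
    rw [latticeBox, Fintype.card_piFinset_const, card_range]
    exact Nat.pow_le_pow_left hKn d
  set T : ℝ := (M ^ d).choose (n ^ d) * (2 / (n : ℝ) ^ (d + 3)) with hT
  calc (#((latticeBox d K).biUnion (irregularConfigs n K M)) : ℝ)
      ≤ ∑ q ∈ latticeBox d K, (#(irregularConfigs n K M q) : ℝ) := by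
        exact_mod_cast card_biUnion_le
    _ ≤ #(latticeBox d K) * T := by
        rw [← nsmul_eq_mul]
        exact sum_le_card_nsmul _ _ _ fun q hq => card_irregularConfigs_le hd hn hnM hK hq
    _ ≤ n ^ d * T := by
        gcongr
        exact_mod_cast card_box_le
    _ = (M ^ d).choose (n ^ d) * (2 / (n : ℝ) ^ 3) := by
        rw [hT, pow_add]
        field_simp

/-- The `n^d`-point configurations that are irregular in some cell of some dyadic scale up to
`2^k`. -/
noncomputable def dyadicallyIrregularConfigs (d n k M : ℕ) :
    Finset (Finset (gridPt d (M : ℤ))) :=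
  (range (k + 1)).biUnion fun κ => (latticeBox d (2 ^ κ)).biUnion (irregularConfigs n (2 ^ κ) M)

lemma card_dyadicallyIrregularConfigs_le (hd : 3 ≤ d) (hn : 2 ≤ n) (hnM : n ≤ M)
    (hk : scaleConst d * Real.logb 2 n ≤ n / 2 ^ k) :
    (#(dyadicallyIrregularConfigs d n k M) : ℝ) ≤
      (M ^ d).choose (n ^ d) * (2 / (n : ℝ) ^ 2) := by
  have two_le := two_le_of_scaleConst_mul_logb_le hn hk
  have two_pow_le : 2 ^ k ≤ n := by
    exact_mod_cast (one_le_div (by positivity)).1 (one_le_two.trans two_le)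
  calc (#(dyadicallyIrregularConfigs d n k M) : ℝ)
      ≤ ∑ κ ∈ range (k + 1),
          (#((latticeBox d (2 ^ κ)).biUnion (irregularConfigs n (2 ^ κ) M)) : ℝ) := by
        exact_mod_cast card_biUnion_le
    _ ≤ #(range (k + 1)) * ((M ^ d).choose (n ^ d) * (2 / (n : ℝ) ^ 3)) := by
        rw [← nsmul_eq_mul]
        refine sum_le_card_nsmul _ _ _ fun κ hκ => ?_
        have two_pow_mono : 2 ^ κ ≤ 2 ^ k :=
          Nat.pow_le_pow_right two_pos (Nat.lt_succ_iff.1 (mem_range.1 hκ))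
        refine card_biUnion_latticeBox_irregularConfigs_le hd hn hnM
          (two_pow_mono.trans two_pow_le) (hk.trans ?_)
        gcongr
        exact_mod_cast two_pow_mono
    _ ≤ n * ((M ^ d).choose (n ^ d) * (2 / (n : ℝ) ^ 3)) := by
        rw [card_range]
        gcongr
        exact Nat.lt_two_pow_self.trans_le two_pow_le
    _ = (M ^ d).choose (n ^ d) * (2 / (n : ℝ) ^ 2) := by field_simp

lemma ncard_setOf_lt_Fleast_le (hd : 3 ≤ d) (hn : 2 ≤ n) (hnM : n ≤ M)
    (hk : scaleConst d * Real.logb 2 n ≤ n / 2 ^ k) :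
    ({S : Config d (M : ℤ) (n ^ d) |
      d * (4 * ((n : ℝ) / 2 ^ k) + 1) < Fleast d n (toLattice S.1)}.ncard : ℝ) ≤
        (M ^ d).choose (n ^ d) * (2 / (n : ℝ) ^ 2) := by
  refine le_trans ?_ (card_dyadicallyIrregularConfigs_le hd hn hnM hk)
  rw [← Set.ncard_image_of_injective _ Subtype.val_injective, ← Set.ncard_coe_finset]
  gcongr
  · exact finite_toSet _
  rintro _ ⟨S, hS, rfl⟩
  by_contra hreg
  refine hS.not_ge (Fleast_toLattice_le_of_notMem_irregularConfigs (by omega) hn hnM hk S.2 ?_)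
  exact fun κ hκ q hq hbad => hreg (mem_coe.2 (mem_biUnion.2
    ⟨κ, mem_range.2 (by omega), mem_biUnion.2 ⟨q, hq, hbad⟩⟩))

lemma exists_le_div_two_pow_le {a : ℝ} (ha : 0 < a) (han : a ≤ n) :
    ∃ k : ℕ, a ≤ n / 2 ^ k ∧ (n : ℝ) / 2 ^ k ≤ 2 * a := by
  obtain ⟨k, hk_le, hk_lt⟩ := exists_nat_pow_near ((one_le_div ha).2 han) one_lt_two
  rw [le_div_iff₀ ha] at hk_le
  rw [div_lt_iff₀ ha, pow_succ] at hk_lt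
  refine ⟨k, (le_div_iff₀ (by positivity)).2 ?_, (div_le_iff₀ (by positivity)).2 ?_⟩ <;> linarith

lemma eventually_mul_logb_le (b : ℝ) : ∀ᶠ n : ℕ in atTop, b * Real.logb 2 n ≤ n := by
  have : (fun n : ℕ => b * Real.logb 2 n) =o[atTop] (fun n : ℕ => (n : ℝ)) := by
    simp_rw [Real.logb, div_eq_inv_mul, ← mul_assoc]
    exact (Real.isLittleO_log_id_atTop.comp_tendsto tendsto_natCast_atTop_atTop).const_mul_left _
  filter_upwards [this.bound one_pos] with n hn
  simpa using (le_abs_self _).trans hn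

/-- The constant bounding the Lipschitz constants relative to `log₂ n`. -/
noncomputable def lipschitzConst (d : ℕ) : ℝ := d * (8 * scaleConst d + 1)

lemma eventually_ncard_lipschitzConst_lt_Fleast_le (hd : 3 ≤ d) :
    ∀ᶠ n : ℕ in atTop, ∀ M, n ≤ M → ({S : Config d (M : ℤ) (n ^ d) |
      lipschitzConst d * Real.logb 2 n < Fleast d n (toLattice S.1)}.ncard : ℝ) ≤
        (M ^ d).choose (n ^ d) * (2 / (n : ℝ) ^ 2) := by
  filter_upwards [eventually_mul_logb_le (scaleConst d), eventually_ge_atTop 2] with n hn hn2 M hnM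
  have one_le := one_le_logb_two hn2
  obtain ⟨k, hk_le, hk_ge⟩ := exists_le_div_two_pow_le
    (mul_pos (scaleConst_pos d) (by linarith : 0 < Real.logb 2 n)) hn
  have threshold_le :
      d * (4 * ((n : ℝ) / 2 ^ k) + 1) ≤ lipschitzConst d * Real.logb 2 n := by
    rw [lipschitzConst, mul_assoc]
    gcongr
    linarith
  have ncard_mono := Set.ncard_le_ncard (s := {S : Config d (M : ℤ) (n ^ d) |
    lipschitzConst d * Real.logb 2 n < Fleast d n (toLattice S.1)})
    (fun S hS => threshold_le.trans_lt hS) (Set.toFinite _)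
  exact (Nat.cast_le.2 ncard_mono).trans (ncard_setOf_lt_Fleast_le hd hn2 hnM hk_le)

end DyadicRegularity

section AlmostSure

open Filter

lemma ae_eventually_notMem_of_eventually_le {Ω : Type*} [MeasurableSpace Ω] {μ : Measure Ω}
    {E : ℕ → Set Ω} {a : ℕ → ℝ} (ha : Summable a)
    (hE : ∀ᶠ n in atTop, μ (E n) ≤ ENNReal.ofReal (a n)) :
    ∀ᵐ ω ∂μ, ∀ᶠ n in atTop, ω ∉ E n := by
  obtain ⟨N, hN⟩ := eventually_atTop.1 hE
  have shifted : ∀ᵐ ω ∂μ, ∀ᶠ n in atTop, ω ∉ E (n + N) := by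
    refine ae_eventually_notMem (ne_top_of_le_ne_top ?_
      (ENNReal.tsum_le_tsum fun n => hN (n + N) (by omega)))
    exact ((summable_nat_add_iff N).2 ha).tsum_ofReal_ne_top
  filter_upwards [shifted] with ω hω
  rw [← map_add_atTop_eq_nat N]
  exact hω

lemma ncard_div_card_config_le {d n : ℕ} {m : ℤ} (hm : (n : ℤ) ≤ m)
    {A : Set (Config d m (n ^ d))} {p : ℝ} (hp : 0 ≤ p)
    (hA : (A.ncard : ℝ) ≤ (m.toNat ^ d).choose (n ^ d) * p) :
    (A.ncard : ENNReal) / Fintype.card (Config d m (n ^ d)) ≤ ENNReal.ofReal p := by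
  lift m to ℕ using by omega
  rw [card_config]
  refine ENNReal.div_le_of_le_mul ?_
  rw [← ENNReal.ofReal_natCast, ← ENNReal.ofReal_natCast, ← ENNReal.ofReal_mul hp, mul_comm]
  exact ENNReal.ofReal_le_ofReal hA

theorem stmt_0_general (d : ℕ) (hd : 3 ≤ d) (m : ℕ → ℤ) (hm : ∀ n : ℕ, (n : ℤ) ≤ m n)
    {Ω : Type*} [MeasurableSpace Ω] (μ : Measure Ω) (X : ∀ n : ℕ, Ω → Config d (m n) (n ^ d))
    (hX : ∀ (n : ℕ) (A : Set (Config d (m n) (n ^ d))),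
      μ {ω | X n ω ∈ A} =
        (A.ncard : ENNReal) / (Fintype.card (Config d (m n) (n ^ d)) : ENNReal)) :
    ∀ᵐ ω ∂μ, limsup
      (fun n : ℕ => ((Fleast d n (toLattice (X n ω).1) / Real.logb 2 n : ℝ) : EReal)) atTop ≤
        (lipschitzConst d : EReal) := by
  have eventually_prob_le : ∀ᶠ n : ℕ in atTop,
      μ {ω | lipschitzConst d * Real.logb 2 n < Fleast d n (toLattice (X n ω).1)} ≤
        ENNReal.ofReal (2 / (n : ℝ) ^ 2) := by
    filter_upwards [eventually_ncard_lipschitzConst_lt_Fleast_le hd] with n hn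
    have exceptional_count := hn (m n).toNat (by have := hm n; omega)
    rw [Int.toNat_of_nonneg (by have := hm n; omega)] at exceptional_count
    exact (hX n {S | lipschitzConst d * Real.logb 2 n < Fleast d n (toLattice S.1)}).trans_le
      (ncard_div_card_config_le (hm n) (by positivity) exceptional_count)
  have summable_bound : Summable fun n : ℕ => 2 / (n : ℝ) ^ 2 := by
    simpa only [mul_one_div] using (Real.summable_one_div_nat_pow.2 one_lt_two).mul_left 2
  filter_upwards [ae_eventually_notMem_of_eventually_le summable_bound eventually_prob_le] with ω hω
  refine limsup_le_of_le (by isBoundedDefault) ?_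
  filter_upwards [hω, eventually_ge_atTop 2] with n hn hn2
  have := one_le_logb_two hn2
  rw [EReal.coe_le_coe_iff, div_le_iff₀ (by linarith)]
  exact not_lt.1 hn

lemma natCast_le_floor_mul {a : ℝ} (ha : 1 ≤ a) (n : ℕ) : (n : ℤ) ≤ ⌊a * n⌋ := by
  rw [Int.le_floor, Int.cast_natCast]
  exact le_mul_of_one_le_left n.cast_nonneg ha

lemma one_le_one_add_div_logb_rpow {a e : ℝ} (ha : 0 ≤ a) (he : 0 ≤ e) (n : ℕ) :
    1 ≤ (1 + a / Real.logb 2 n) ^ e := by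
  have logb_nonneg : 0 ≤ Real.logb 2 n :=
    div_nonneg (Real.log_natCast_nonneg n) (Real.log_nonneg one_le_two)
  exact Real.one_le_rpow (le_add_of_nonneg_right (by positivity)) he

lemma measure_coordinate_eq_of_cylinders {ι : Type*} {X : ι → Type*}
    [∀ i, MeasurableSpace (X i)] {μ : Measure (∀ i, X i)} {ν : ∀ i, Set (X i) → ENNReal}
    (hμ : ∀ (J : Finset ι) (A : ∀ i, Set (X i)),
      μ {ω | ∀ i ∈ J, ω i ∈ A i} = ∏ i ∈ J, ν i (A i)) (i : ι) (A : Set (X i)) :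
    μ {ω | ω i ∈ A} = ν i A := by
  classical
  simpa using hμ {i} (Function.update (fun _ => ∅) i A)

end AlmostSure

/-- (The uniform product measure on the sequence space `𝒢_{(c_n)}` is characterised by
its values on cylinders: for every finite set `J` of coordinates and all events `A n`,
its value on `{ω | ∀ n ∈ J, ω n ∈ A n}` is `∏_{n ∈ J} |A n| / |Config n|`.)
For `d ≥ 4` and `c_n ≥ (1 + 2^(d+5)/log₂ n)^(1/d)` (n ≥ 2), a random sequence `(S_n)`
in `𝒢_{(c_n)}` almost surely satisfies `limsup_n F_n(S_n)/log₂ n < ∞`. -/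
theorem stmt_0 (d : ℕ) (hd : 4 ≤ d) (c : ℕ → ℝ) (hc1 : 1 ≤ c 1)
    (hc : ∀ n : ℕ, 2 ≤ n →
      ((1 : ℝ) + 2 ^ (d + 5) / Real.logb 2 n) ^ ((d : ℝ)⁻¹) ≤ c n)
    (μ : Measure (∀ n : ℕ, Config d ⌊c n * n⌋ (n ^ d)))
    (hμ : ∀ (J : Finset ℕ) (A : ∀ n : ℕ, Set (Config d ⌊c n * n⌋ (n ^ d))),
      μ {ω | ∀ n ∈ J, ω n ∈ A n} =
        ∏ n ∈ J, (Set.ncard (A n) : ENNReal) /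
          (Fintype.card (Config d ⌊c n * n⌋ (n ^ d)) : ENNReal)) :
    μ {ω | Filter.limsup
        (fun n : ℕ => ((Fleast d n (toLattice (ω n).1) / Real.logb 2 n : ℝ) : EReal))
        Filter.atTop < (⊤ : EReal)} = 1 := by
  have hm (n : ℕ) : (n : ℤ) ≤ ⌊c n * n⌋ := by
    obtain rfl | rfl | hn : n = 0 ∨ n = 1 ∨ 2 ≤ n := by omega
    · simp
    · exact natCast_le_floor_mul hc1 1
    · exact natCast_le_floor_mul
        ((one_le_one_add_div_logb_rpow (by positivity) (by positivity) n).trans (hc n hn)) n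
  have total_mass : μ Set.univ = 1 := by
    simpa using hμ ∅ fun _ => ∅
  rw [← total_mass]
  refine measure_congr (Filter.eventuallyEq_univ.2 ?_)
  filter_upwards [stmt_0_general d (by omega) _ hm μ (fun n ω => ω n)
    (measure_coordinate_eq_of_cylinders hμ)] with ω hω
  exact hω.trans_lt (EReal.coe_lt_top _)
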